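/- arXiv:2211.07978 — 4 statements merged into one kernel-verified Lean document; each statement's English description precedes it below -/
import Mathlib

section
/- The bipyramid collapses to its subcomplex generated by the edge {v,a⁺} and the three triangles {u,v,a⁻}, {u,w,a⁻}, {v,w,a⁻}, i.e., to the subcomplex consisting of all faces contained in one of these four faces. -/
/-!
STATEMENT 0: The bipyramid collapses to its subcomplex generated by the edge
{v,a⁺} and the three triangles {u,v,a⁻}, {u,w,a⁻}, {v,w,a⁻}.
-/

namespace PaperFormal

variable {V : Type*}

/-- `K` is a finite abstract simplicial complex: a collection of finite nonempty
sets closed under taking nonempty subsets. -/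
def IsComplex (K : Set (Finset V)) : Prop :=
  (∀ σ ∈ K, σ ≠ ∅) ∧ ∀ σ ∈ K, ∀ τ : Finset V, τ ⊆ σ → τ ≠ ∅ → τ ∈ K

/-- A facet is an inclusion-maximal face. -/
def IsFacet (K : Set (Finset V)) (σ : Finset V) : Prop :=
  σ ∈ K ∧ ∀ τ ∈ K, σ ⊆ τ → σ = τ

/-- An elementary collapse of `K` to `K'` through the free face `σ`, whose unique
containing facet is `F`: it removes `σ` and all faces containing it. -/
def ElemCollapseVia (K K' : Set (Finset V)) (σ F : Finset V) : Prop :=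
  σ ∈ K ∧ ¬ IsFacet K σ ∧ IsFacet K F ∧ σ ⊆ F ∧
    (∀ G, IsFacet K G → σ ⊆ G → G = F) ∧
    K' = {τ ∈ K | ¬ σ ⊆ τ}

/-- An elementary collapse. -/
def ElemCollapse (K K' : Set (Finset V)) : Prop :=
  ∃ σ F, ElemCollapseVia K K' σ F

/-- `K` collapses to `L` via a finite sequence of elementary collapses. -/
def Collapses (K L : Set (Finset V)) : Prop :=
  ∃ (c : ℕ → Set (Finset V)) (n : ℕ), c 0 = K ∧ c n = L ∧
    ∀ i < n, ElemCollapse (c i) (c (i + 1))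

/-- The subcomplex of `K` generated by the faces in `S`: all faces of `K`
contained in some member of `S`. -/
def generatedBy (K S : Set (Finset V)) : Set (Finset V) :=
  {τ ∈ K | ∃ θ ∈ S, τ ⊆ θ}

/-- The bipyramid on vertices `u, v, w, ap, am`: the join of the boundary of the
triangle `uvw` with the edge `ap am`; its faces are the nonempty sets `σ ∪ τ`
with `σ ⊊ {u,v,w}` and `τ ⊆ {ap,am}`. -/
def bipyramid [DecidableEq V] (u v w ap am : V) : Set (Finset V) :=
  {F : Finset V | F ≠ ∅ ∧ F ⊆ {u, v, w, ap, am} ∧ ¬ ({u, v, w} : Finset V) ⊆ F}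

/-!
If a finite family `D` of faces is closed under adding and under removing a vertex `a`, and `D` is
closed upwards in `K`, then `K` collapses to `K \ D`: a face `σ` maximal among the members of `D`
avoiding `a` is free, with `insert a σ` its only proper coface, and removing this pair leaves a
family of the same kind.

The bipyramid needs two such collapses. Pairing along `a⁻` removes all faces containing `a⁺` that
are not contained in `{v, a⁺, a⁻}`, and pairing along `v` then removes `{a⁺, a⁻}` and
`{v, a⁺, a⁻}`. What survives are the faces avoiding `a⁺` and the faces of the edge `{v, a⁺}`.
-/

theorem collapses_iff_reflTransGen {K L : Set (Finset V)} :
    Collapses K L ↔ Relation.ReflTransGen ElemCollapse K L := by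
  constructor
  · rintro ⟨c, n, rfl, rfl, hc⟩
    have hchain := reflTransGen_of_succ_of_le (fun i j ↦ ElemCollapse (c i) (c j))
      (fun i hi ↦ hc i hi.2) n.zero_le
    exact hchain.lift c fun _ _ h ↦ h
  · intro h
    induction h using Relation.ReflTransGen.head_induction_on with
    | refl => exact ⟨fun _ ↦ L, 0, rfl, rfl, by simp⟩
    | @head K K' hstep _ ih =>
      obtain ⟨c, n, rfl, rfl, hc⟩ := ih
      refine ⟨fun i ↦ Nat.casesOn i K c, n + 1, rfl, rfl, ?_⟩
      rintro (_ | i) hi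
      · exact hstep
      · exact hc i (Nat.lt_of_succ_lt_succ hi)

theorem Collapses.refl (K : Set (Finset V)) : Collapses K K :=
  collapses_iff_reflTransGen.2 .refl

theorem Collapses.head {K K' L : Set (Finset V)} (h : ElemCollapse K K') (h' : Collapses K' L) :
    Collapses K L :=
  collapses_iff_reflTransGen.2 ((collapses_iff_reflTransGen.1 h').head h)

theorem Collapses.trans {K L M : Set (Finset V)} (h : Collapses K L) (h' : Collapses L M) :
    Collapses K M :=
  collapses_iff_reflTransGen.2
    ((collapses_iff_reflTransGen.1 h).trans (collapses_iff_reflTransGen.1 h'))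

theorem elemCollapse_of_forall_subset {K : Set (Finset V)} {σ F : Finset V} (hσ : σ ∈ K)
    (hF : F ∈ K) (hσF : σ ⊂ F) (hstar : ∀ τ ∈ K, σ ⊆ τ → τ ⊆ F) :
    ElemCollapse K {τ ∈ K | ¬ σ ⊆ τ} := by
  refine ⟨σ, F, hσ, fun hfacet ↦ hσF.ne (hfacet.2 F hF hσF.subset), ⟨hF, fun τ hτ hFτ ↦ ?_⟩,
    hσF.subset, fun G hG hσG ↦ hG.2 F hF (hstar G hG.1 hσG), rfl⟩
  exact hFτ.antisymm (hstar τ hτ (hσF.subset.trans hFτ))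

/-- The faces of `K` that avoid the vertex `p` or are contained in `S`: the star of `p` is cut down
to its part inside `S`, and the rest of `K` is kept. -/
def restrictStar (K : Set (Finset V)) (p : V) (S : Finset V) : Set (Finset V) :=
  {τ ∈ K | p ∈ τ → τ ⊆ S}

theorem restrictStar_restrictStar_of_subset {K : Set (Finset V)} {p : V} {S T : Finset V}
    (hST : S ⊆ T) :
    restrictStar (restrictStar K p T) p S = restrictStar K p S := by
  ext τ
  exact ⟨fun h ↦ ⟨h.1.1, h.2⟩, fun h ↦ ⟨⟨h.1, fun hp ↦ (h.2 hp).trans hST⟩, h.2⟩⟩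

section Toggle

variable [DecidableEq V] {K L D : Set (Finset V)} {a p : V} {σ S : Finset V}

/-- The family `D` is closed under adding and under removing the vertex `a`, so that it is
partitioned into the pairs `σ`, `insert a σ` with `a ∉ σ`. -/
def ToggleClosed (a : V) (D : Set (Finset V)) : Prop :=
  ∀ σ ∈ D, insert a σ ∈ D ∧ σ.erase a ∈ D

theorem ToggleClosed.sep_not_subset (hD : ToggleClosed a D) (ha : a ∉ σ) :
    ToggleClosed a {τ ∈ D | ¬ σ ⊆ τ} := by
  rintro τ ⟨hτ, hστ⟩
  refine ⟨⟨(hD τ hτ).1, ?_⟩, (hD τ hτ).2, fun h ↦ hστ (h.trans (τ.erase_subset a))⟩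
  rwa [Finset.subset_insert_iff_of_notMem ha]

theorem ToggleClosed.exists_free_face (hD : ToggleClosed a D) (hfin : D.Finite)
    (hne : D.Nonempty) : ∃ σ ∈ D, a ∉ σ ∧ ∀ τ ∈ D, σ ⊆ τ → τ ⊆ insert a σ := by
  obtain ⟨ρ, hρ⟩ := hne
  have havoid : {σ ∈ D | a ∉ σ}.Nonempty := ⟨ρ.erase a, (hD ρ hρ).2, ρ.notMem_erase a⟩
  obtain ⟨σ, ⟨hσ, ha⟩, hmax⟩ := (hfin.sep _).exists_maximal havoid
  refine ⟨σ, hσ, ha, fun τ hτ hστ ↦ Finset.subset_insert_iff.2 ?_⟩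
  exact hmax ⟨(hD τ hτ).2, τ.notMem_erase a⟩ (Finset.subset_erase.2 ⟨hστ, ha⟩)

theorem collapses_of_toggleClosed_sdiff (hLK : L ⊆ K)
    (hlower : ∀ σ ∈ L, ∀ τ ∈ K, τ ⊆ σ → τ ∈ L) (hfin : (K \ L).Finite)
    (htoggle : ToggleClosed a (K \ L)) : Collapses K L := by
  induction hn : (K \ L).ncard using Nat.strong_induction_on generalizing K with
  | _ n ih =>
    obtain hempty | hne := (K \ L).eq_empty_or_nonempty
    · rw [hLK.antisymm (Set.sdiff_eq_empty.1 hempty)]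
      exact .refl K
    obtain ⟨σ, hσ, ha, hfree⟩ := htoggle.exists_free_face hfin hne
    have hupper : ∀ τ ∈ K, σ ⊆ τ → τ ∈ K \ L := fun τ hτ hστ ↦
      ⟨hτ, fun hτL ↦ hσ.2 (hlower τ hτL σ hσ.1 hστ)⟩
    have hstep : ElemCollapse K {τ ∈ K | ¬ σ ⊆ τ} :=
      elemCollapse_of_forall_subset hσ.1 (htoggle σ hσ).1.1 (Finset.ssubset_insert ha)
        fun τ hτ hστ ↦ hfree τ (hupper τ hτ hστ) hστ
    have hsdiff : {τ ∈ K | ¬ σ ⊆ τ} \ L = {τ ∈ K \ L | ¬ σ ⊆ τ} :=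
      Set.ext fun _ ↦ and_right_comm
    have hssubset : {τ ∈ K | ¬ σ ⊆ τ} \ L ⊂ K \ L := by
      rw [hsdiff]
      exact ⟨Set.sep_subset .., fun h ↦ (h hσ).2 subset_rfl⟩
    refine .head hstep (ih _ (hn ▸ Set.ncard_lt_ncard hssubset hfin)
      (fun τ hτ ↦ ⟨hLK hτ, fun hστ ↦ (hupper τ (hLK hτ) hστ).2 hτ⟩)
      (fun τ hτ ρ hρ ↦ hlower τ hτ ρ hρ.1) (hfin.subset hssubset.subset) ?_ rfl)
    rw [hsdiff]
    exact htoggle.sep_not_subset ha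

theorem collapses_restrictStar (hfin : K.Finite) (hap : a ≠ p) (haS : a ∈ S)
    (htoggle : ∀ τ ∈ K, p ∈ τ → ¬ τ ⊆ S → insert a τ ∈ K ∧ τ.erase a ∈ K) :
    Collapses K (restrictStar K p S) := by
  have hmem : ∀ τ, τ ∈ K \ restrictStar K p S ↔ τ ∈ K ∧ p ∈ τ ∧ ¬ τ ⊆ S := by
    intro τ
    simp only [restrictStar, Set.mem_sdiff, Set.mem_ofPred_eq]
    tauto
  refine collapses_of_toggleClosed_sdiff (Set.sep_subset ..)
    (fun σ hσ τ hτ hτσ ↦ ⟨hτ, fun hp ↦ hτσ.trans (hσ.2 (hτσ hp))⟩) hfin.sdiff (a := a) ?_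
  intro τ hτ
  obtain ⟨hτK, hp, hτS⟩ := (hmem τ).1 hτ
  obtain ⟨hinsert, herase⟩ := htoggle τ hτK hp hτS
  refine ⟨(hmem _).2 ⟨hinsert, Finset.mem_insert_of_mem hp, ?_⟩,
    (hmem _).2 ⟨herase, Finset.mem_erase.2 ⟨hap.symm, hp⟩, ?_⟩⟩
  · exact fun h ↦ hτS ((τ.subset_insert a).trans h)
  · rwa [Finset.erase_subset_iff_of_mem haS]

end Toggle

section Bipyramid

variable [DecidableEq V] {u v w ap am x : V} {τ : Finset V}

theorem bipyramid_finite : (bipyramid u v w ap am).Finite :=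
  (Finset.finite_toSet (Finset.powerset {u, v, w, ap, am})).subset
    fun _ hτ ↦ Finset.mem_coe.2 (Finset.mem_powerset.2 hτ.2.1)

theorem erase_mem_bipyramid (hτ : τ ∈ bipyramid u v w ap am) (hne : τ.erase x ≠ ∅) :
    τ.erase x ∈ bipyramid u v w ap am :=
  ⟨hne, (τ.erase_subset x).trans hτ.2.1, fun h ↦ hτ.2.2 (h.trans (τ.erase_subset x))⟩

theorem insert_mem_bipyramid (hτ : τ ∈ bipyramid u v w ap am)
    (hx : x ∈ ({u, v, w, ap, am} : Finset V)) (htri : ¬ {u, v, w} ⊆ insert x τ) :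
    insert x τ ∈ bipyramid u v w ap am :=
  ⟨Finset.insert_ne_empty x τ, Finset.insert_subset hx hτ.2.1, htri⟩

theorem bipyramid_collapses_restrictStar_triangle (ham : am ∉ ({u, v, w} : Finset V))
    (hap : am ≠ ap) :
    Collapses (bipyramid u v w ap am) (restrictStar (bipyramid u v w ap am) ap {v, ap, am}) := by
  refine collapses_restrictStar bipyramid_finite hap (by simp) fun τ hτ hp _ ↦ ⟨?_, ?_⟩
  · refine insert_mem_bipyramid hτ (by simp) ?_
    rw [Finset.subset_insert_iff_of_notMem ham]
    exact hτ.2.2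
  · exact erase_mem_bipyramid hτ (Finset.ne_empty_of_mem (Finset.mem_erase.2 ⟨hap.symm, hp⟩))

theorem restrictStar_triangle_collapses_restrictStar_edge
    (hu : u ∉ ({v, ap, am} : Finset V)) (hv : v ≠ ap) :
    Collapses (restrictStar (bipyramid u v w ap am) ap {v, ap, am})
      (restrictStar (bipyramid u v w ap am) ap {v, ap}) := by
  have hedge : ({v, ap} : Finset V) ⊆ {v, ap, am} := by grind
  rw [← restrictStar_restrictStar_of_subset hedge]
  refine collapses_restrictStar (bipyramid_finite.sep _) hv (by simp)
    fun τ ⟨hτ, hstar⟩ hp _ ↦ ⟨?_, ?_⟩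
  · have hsub : insert v τ ⊆ {v, ap, am} := Finset.insert_subset (by simp) (hstar hp)
    exact ⟨insert_mem_bipyramid hτ (by simp) fun htri ↦ hu (hsub (htri (by simp))), fun _ ↦ hsub⟩
  · exact ⟨erase_mem_bipyramid hτ (Finset.ne_empty_of_mem (Finset.mem_erase.2 ⟨hv.symm, hp⟩)),
      fun _ ↦ (τ.erase_subset v).trans (hstar hp)⟩

theorem subset_triangle_of_mem_bipyramid (hτ : τ ∈ bipyramid u v w ap am) (hp : ap ∉ τ) :
    τ ⊆ {u, v, am} ∨ τ ⊆ {u, w, am} ∨ τ ⊆ {v, w, am} := by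
  obtain ⟨-, hsub, htri⟩ := hτ
  have hmissing : u ∉ τ ∨ v ∉ τ ∨ w ∉ τ := by grind
  rcases hmissing with hu | hv | hw
  · right; right; grind
  · right; left; grind
  · left; grind

theorem generatedBy_eq_restrictStar_edge (hap : ap ∉ ({u, v, w, am} : Finset V)) :
    generatedBy (bipyramid u v w ap am) {{v, ap}, {u, v, am}, {u, w, am}, {v, w, am}} =
      restrictStar (bipyramid u v w ap am) ap {v, ap} := by
  ext τ
  simp only [generatedBy, restrictStar, Set.mem_ofPred_eq, Set.mem_insert_iff,
    Set.mem_singleton_iff, exists_eq_or_imp, exists_eq_left]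
  refine and_congr_right fun hτ ↦ ⟨?_, fun hstar ↦ ?_⟩
  · rintro (hedge | htri | htri | htri) hp
    · exact hedge
    all_goals grind
  · by_cases hp : ap ∈ τ
    · exact .inl (hstar hp)
    · exact .inr (subset_triangle_of_mem_bipyramid hτ hp)

end Bipyramid

/-- Lemma 2.2(i): the bipyramid collapses to the subcomplex generated by the edge
`{v,a⁺}` and the triangles `{u,v,a⁻}`, `{u,w,a⁻}`, `{v,w,a⁻}`. -/
theorem bipyramid_collapses_pos [DecidableEq V] (u v w ap am : V)
    (hdist : ({u, v, w, ap, am} : Finset V).card = 5) :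
    Collapses (bipyramid u v w ap am)
      (generatedBy (bipyramid u v w ap am)
        ({{v, ap}, {u, v, am}, {u, w, am}, {v, w, am}} : Set (Finset V))) := by
  have hnodup : [u, v, w, ap, am].Nodup :=
    Multiset.coe_nodup.1 (Multiset.toFinset_card_eq_card_iff_nodup.1 (by simpa using hdist))
  simp only [List.nodup_cons, List.mem_cons, List.not_mem_nil, or_false, not_or] at hnodup
  rw [generatedBy_eq_restrictStar_edge (by grind)]
  exact (bipyramid_collapses_restrictStar_triangle (by grind) (by grind)).trans
    (restrictStar_triangle_collapses_restrictStar_edge (by grind) (by grind))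

end PaperFormal
end

section
/- Assume the bipyramid B (on vertices u,v,w,a⁺,a⁻) is a subcomplex of a finite simplicial complex K such that the constraint complex of B in K is exactly the 1-dimensional subcomplex formed by the five edges {u,v}, {u,w}, {v,w}, {v,a⁺}, {v,a⁻} and their vertices. Then there is no sequence of elementary collapses of K in which both {v,a⁺} and {v,a⁻} are removed strictly before any of the three edges {u,v}, {u,w}, {v,w} is removed, with {v,a⁺} removed by an elementary collapse whose unique containing facet is a triangle of K not belonging to B, and likewise {v,a⁻} removed by an elementary collapse whose unique containing facet is a triangle of K not belonging to B. -/
/-!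
STATEMENT 2: If the bipyramid B sits in a complex K with constraint complex
exactly the five edges {u,v},{u,w},{v,w},{v,a⁺},{v,a⁻} (and their vertices),
then no collapsing sequence of K removes both {v,a⁺} and {v,a⁻} strictly before
all three edges {u,v},{u,w},{v,w}, via collapses whose unique containing facet
is a triangle of K outside B.
-/

namespace PaperFormal

variable {V : Type*}

/-- The constraint complex of `B` in `K`: the faces of `B` contained in some face
of `K` not belonging to `B`. -/
def constraintComplex (K B : Set (Finset V)) : Set (Finset V) :=
  {σ ∈ B | ∃ τ ∈ K, τ ∉ B ∧ σ ⊆ τ}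

/-!
The three edges of the triangle `uvw` form a mod 2 cycle which bounds inside the bipyramid, and no
triangle of the bipyramid lies in a face outside it. So an elementary collapse either misses a given
filling of the cycle by triangles of the bipyramid, or its facet lies in the bipyramid, and then the
filling can be pushed off the removed faces within that facet. Hence, as long as the three edges are
present, the cycle bounds a chain of surviving triangles of the bipyramid, one of which contains
`uv`: `uva⁺` or `uva⁻`. But when `va⁺` is removed by a collapse whose facet lies outside the
bipyramid, no triangle of the bipyramid containing `va⁺` is left, and likewise for `va⁻`.
-/

open Finset Relation

section Collapse

variable {K L L' B : Set (Finset V)} {σ τ F : Finset V}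

theorem exists_isFacet_superset (hK : K.Finite) (hτ : τ ∈ K) : ∃ G, IsFacet K G ∧ τ ⊆ G := by
  obtain ⟨G, hτG, hG⟩ := hK.exists_le_maximal hτ
  exact ⟨G, ⟨hG.prop, fun _ hρ hGρ => hG.eq_of_le hρ hGρ⟩, hτG⟩

theorem constraintComplex_mono (h : L ⊆ K) : constraintComplex L B ⊆ constraintComplex K B :=
  fun _ ⟨hσB, τ, hτL, hτB, hστ⟩ => ⟨hσB, τ, h hτL, hτB, hστ⟩

namespace ElemCollapseVia

theorem mem_iff (h : ElemCollapseVia L L' σ F) : τ ∈ L' ↔ τ ∈ L ∧ ¬ σ ⊆ τ := by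
  obtain ⟨-, -, -, -, -, rfl⟩ := h
  rfl

theorem subset (h : ElemCollapseVia L L' σ F) : L' ⊆ L :=
  fun _ hτ => (h.mem_iff.1 hτ).1

theorem subset_of_notMem (h : ElemCollapseVia L L' σ F) (hτ : τ ∈ L) (hτ' : τ ∉ L') : σ ⊆ τ :=
  of_not_not fun hστ => hτ' (h.mem_iff.2 ⟨hτ, hστ⟩)

theorem ssubset (h : ElemCollapseVia L L' σ F) : σ ⊂ F := by
  obtain ⟨-, hσ, hF, hσF, -, -⟩ := h
  exact hσF.ssubset_of_ne fun h => hσ (h ▸ hF)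

theorem subset_facet (h : ElemCollapseVia L L' σ F) (hL : L.Finite) (hτ : τ ∈ L) (hστ : σ ⊆ τ) :
    τ ⊆ F := by
  obtain ⟨-, -, -, -, hunique, -⟩ := h
  obtain ⟨G, hG, hτG⟩ := exists_isFacet_superset hL hτ
  exact hunique G hG (hστ.trans hτG) ▸ hτG

theorem isComplex (h : ElemCollapseVia L L' σ F) (hL : IsComplex L) : IsComplex L' := by
  refine ⟨fun τ hτ => hL.1 τ (h.subset hτ), fun τ hτ ρ hρτ hρ => ?_⟩
  obtain ⟨hτL, hστ⟩ := h.mem_iff.1 hτ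
  exact h.mem_iff.2 ⟨hL.2 τ hτL ρ hρτ hρ, fun hσρ => hστ (hσρ.trans hρτ)⟩

theorem notMem_of_facet_notMem (h : ElemCollapseVia L L' σ F) (hL : L.Finite) (hFB : F ∉ B)
    (hτB : τ ∈ B) (hστ : σ ⊆ τ) (hτ : τ ∉ constraintComplex L B) : τ ∉ L := by
  intro hτL
  have hF : IsFacet L F := h.2.2.1
  exact hτ ⟨hτB, F, hF.1, hFB, h.subset_facet hL hτL hστ⟩

end ElemCollapseVia

theorem subset_of_collapses (h : ReflTransGen ElemCollapse K L) : L ⊆ K := by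
  induction h with
  | refl => exact subset_rfl
  | tail _ hstep ih =>
    obtain ⟨σ, F, hvia⟩ := hstep
    exact hvia.subset.trans ih

theorem isComplex_of_collapses (h : ReflTransGen ElemCollapse K L) (hK : IsComplex K) :
    IsComplex L := by
  induction h with
  | refl => exact hK
  | tail _ hstep ih =>
    obtain ⟨σ, F, hvia⟩ := hstep
    exact hvia.isComplex ih

theorem collapses_of_forall_lt {c : ℕ → Set (Finset V)} {m s t : ℕ}
    (hc : ∀ t < m, ElemCollapse (c t) (c (t + 1))) (hst : s ≤ t) (htm : t ≤ m) :
    ReflTransGen ElemCollapse (c s) (c t) :=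
  (reflTransGen_of_succ_of_le (fun a b => ElemCollapse (c a) (c b))
    (fun r hr => hc r (hr.2.trans_le htm)) hst).lift c fun _ _ h => h

end Collapse

section Chains

variable [DecidableEq V] {s t : Set (Finset V)} {S : Finset V →₀ ZMod 2} {T ρ σ : Finset V} {x : V}

/-- The boundary operator on simplicial chains modulo 2. The chains are augmented: the empty face
is allowed, and is the boundary of every vertex. -/
noncomputable def boundary : (Finset V →₀ ZMod 2) →ₗ[ZMod 2] (Finset V →₀ ZMod 2) :=
  Finsupp.linearCombination (ZMod 2) fun T => ∑ x ∈ T, Finsupp.single (T.erase x) 1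

/-- The cone operator with apex `x` on chains modulo 2. It is meaningful only on chains of faces not
containing `x`. -/
noncomputable def cone (x : V) : (Finset V →₀ ZMod 2) →ₗ[ZMod 2] (Finset V →₀ ZMod 2) :=
  Finsupp.lmapDomain (ZMod 2) (ZMod 2) (insert x)

theorem boundary_single (T : Finset V) :
    boundary (Finsupp.single T 1) = ∑ x ∈ T, Finsupp.single (T.erase x) (1 : ZMod 2) := by
  simp [boundary]

theorem cone_single (x : V) (T : Finset V) :
    cone x (Finsupp.single T 1) = Finsupp.single (insert x T) (1 : ZMod 2) := by
  simp [cone]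

theorem boundary_apply (S : Finset V →₀ ZMod 2) (ρ : Finset V) :
    boundary S ρ = ∑ T ∈ S.support, S T * boundary (Finsupp.single T 1) ρ := by
  simp [boundary, Finsupp.linearCombination_apply, Finsupp.sum, Finsupp.finsetSum_apply]

theorem boundary_single_apply_erase (hx : x ∈ T) :
    boundary (Finsupp.single T 1) (T.erase x) = 1 := by
  rw [boundary_single, Finsupp.finsetSum_apply, sum_eq_single_of_mem x hx, Finsupp.single_eq_same]
  intro y hy hyx
  exact Finsupp.single_eq_of_ne' fun h => hyx ((erase_inj T hy).1 h)

theorem exists_erase_eq_of_boundary_single_apply_ne_zero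
    (h : boundary (Finsupp.single T 1) ρ ≠ 0) : ∃ x ∈ T, T.erase x = ρ := by
  rw [boundary_single, Finsupp.finsetSum_apply] at h
  obtain ⟨x, hx, hxρ⟩ := exists_ne_zero_of_sum_ne_zero h
  exact ⟨x, hx, of_not_not fun hne => hxρ (Finsupp.single_eq_of_ne' hne)⟩

theorem exists_erase_eq_of_boundary_apply_ne_zero (h : boundary S ρ ≠ 0) :
    ∃ T ∈ S.support, ∃ x ∈ T, T.erase x = ρ := by
  rw [boundary_apply] at h
  obtain ⟨T, hT, hTρ⟩ := exists_ne_zero_of_sum_ne_zero h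
  exact ⟨T, hT, exists_erase_eq_of_boundary_single_apply_ne_zero (right_ne_zero_of_mul hTρ)⟩

theorem boundary_mem_supported (hS : S ∈ Finsupp.supported (ZMod 2) (ZMod 2) s)
    (hst : ∀ T ∈ s, ∀ x ∈ T, T.erase x ∈ t) :
    boundary S ∈ Finsupp.supported (ZMod 2) (ZMod 2) t := by
  intro ρ hρ
  obtain ⟨T, hT, x, hx, rfl⟩ :=
    exists_erase_eq_of_boundary_apply_ne_zero (Finsupp.mem_support_iff.1 hρ)
  exact hst T (hS hT) x hx

theorem boundary_single_mem_supported (h : ∀ x ∈ T, T.erase x ∈ t) :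
    boundary (Finsupp.single T 1) ∈ Finsupp.supported (ZMod 2) (ZMod 2) t :=
  boundary_mem_supported (Finsupp.single_mem_supported (ZMod 2) 1 (Set.mem_singleton T))
    (by simpa using h)

theorem cone_mem_supported (hS : S ∈ Finsupp.supported (ZMod 2) (ZMod 2) s)
    (hst : ∀ T ∈ s, insert x T ∈ t) :
    cone x S ∈ Finsupp.supported (ZMod 2) (ZMod 2) t := by
  intro ρ hρ
  obtain ⟨T, hT, rfl⟩ := mem_image.1 (Finsupp.mapDomain_support hρ)
  exact hst T (hS hT)

theorem cone_apply_eq_zero (hx : x ∉ T) : cone x S T = 0 :=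
  Finsupp.mapDomain_of_notMem_range S T fun ⟨ρ, hρ⟩ => hx (hρ ▸ mem_insert_self x ρ)

theorem boundary_cone_single (hx : x ∉ T) :
    boundary (cone x (Finsupp.single T 1)) =
      Finsupp.single T 1 + cone x (boundary (Finsupp.single T 1)) := by
  rw [cone_single, boundary_single, boundary_single, sum_insert hx, erase_insert hx, map_sum]
  congr 1
  refine sum_congr rfl fun y hy => ?_
  rw [cone_single, erase_insert_of_ne (ne_of_mem_of_not_mem hy hx).symm]

theorem boundary_cone (hS : S ∈ Finsupp.supported (ZMod 2) (ZMod 2) {T | x ∉ T}) :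
    boundary (cone x S) = S + cone x (boundary S) := by
  rw [Finsupp.supported_eq_span_single] at hS
  refine LinearMap.eqOn_span (f := boundary ∘ₗ cone x)
    (g := LinearMap.id + cone x ∘ₗ boundary) ?_ hS
  rintro _ ⟨T, hx, rfl⟩
  exact boundary_cone_single hx

theorem boundary_boundary_single (T : Finset V) :
    boundary (boundary (Finsupp.single T 1)) = 0 := by
  induction T using Finset.induction_on with
  | empty => simp [boundary_single]
  | insert x T hx ih =>
    have hT : boundary (Finsupp.single T 1) ∈ Finsupp.supported (ZMod 2) (ZMod 2) {T | x ∉ T} :=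
      boundary_single_mem_supported fun _ _ h => hx (mem_of_mem_erase h)
    rw [← cone_single, boundary_cone_single hx, map_add, boundary_cone hT, ih, map_zero, add_zero,
      ZModModule.add_self]

theorem boundary_boundary (S : Finset V →₀ ZMod 2) : boundary (boundary S) = 0 := by
  have hcomp : boundary ∘ₗ boundary = (0 : (Finset V →₀ ZMod 2) →ₗ[ZMod 2] _) :=
    Finsupp.lhom_ext' fun T => LinearMap.ext_ring (boundary_boundary_single T)
  exact LinearMap.congr_fun hcomp S

theorem exists_notMem_of_boundary_apply_erase_eq_zero (hT : T ∈ S.support) (hx : x ∈ T)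
    (h : boundary S (T.erase x) = 0) : ∃ ρ ∈ S.support, T.erase x ⊆ ρ ∧ x ∉ ρ := by
  by_contra! hmem
  suffices boundary S (T.erase x) = S T from Finsupp.mem_support_iff.1 hT (this ▸ h)
  rw [boundary_apply, sum_eq_single_of_mem T hT, boundary_single_apply_erase hx, mul_one]
  intro ρ hρ hρT
  by_contra hne
  obtain ⟨y, -, hyT⟩ :=
    exists_erase_eq_of_boundary_single_apply_ne_zero (right_ne_zero_of_mul hne)
  have hxρ : x ∈ ρ := hmem ρ hρ (hyT ▸ erase_subset y ρ)
  have hyx : y = x := by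
    by_contra hyx
    exact notMem_erase x T (hyT ▸ mem_erase.2 ⟨Ne.symm hyx, hxρ⟩)
  subst hyx
  exact hρT (by rw [← insert_erase hxρ, hyT, insert_erase hx])

/-- The chain homologous to `S` obtained by pushing every face of `S` that contains `σ` but not `x`
across its cone with apex `x`. It moves `S` off the faces containing `σ` when `x ∉ σ` and the
boundary of `S` avoids those faces. -/
noncomputable def pushOff (σ : Finset V) (x : V) (S : Finset V →₀ ZMod 2) : Finset V →₀ ZMod 2 :=
  S + boundary (cone x (S.filter fun T => σ ⊆ T ∧ x ∉ T))

theorem boundary_pushOff (σ : Finset V) (x : V) (S : Finset V →₀ ZMod 2) :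
    boundary (pushOff σ x S) = boundary S := by
  rw [pushOff, map_add, boundary_boundary, add_zero]

theorem pushOff_apply_eq_zero_of_notMem (hσ : σ ⊆ T) (hx : x ∉ T) : pushOff σ x S T = 0 := by
  have hfilter : S.filter (fun T => σ ⊆ T ∧ x ∉ T) ∈
      Finsupp.supported (ZMod 2) (ZMod 2) {T | x ∉ T} :=
    (Finsupp.mem_supported' _ _).2 fun ρ hρ => Finsupp.filter_apply_neg _ _ fun h => hρ h.2
  rw [pushOff, boundary_cone hfilter, Finsupp.add_apply, Finsupp.add_apply, cone_apply_eq_zero hx,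
    add_zero, Finsupp.filter_apply_pos _ _ ⟨hσ, hx⟩, CharTwo.add_self_eq_zero]

theorem pushOff_apply_eq_zero (hx : x ∉ σ) (hS : ∀ ρ, σ ⊆ ρ → boundary S ρ = 0) (hσ : σ ⊆ T) :
    pushOff σ x S T = 0 := by
  by_contra hT
  have hxT : x ∈ T := of_not_not fun h => hT (pushOff_apply_eq_zero_of_notMem hσ h)
  have hσT : σ ⊆ T.erase x := subset_erase.2 ⟨hσ, hx⟩
  have hboundary : boundary (pushOff σ x S) (T.erase x) = 0 := by
    rw [boundary_pushOff, hS _ hσT]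
  obtain ⟨ρ, hρ, hTρ, hxρ⟩ := exists_notMem_of_boundary_apply_erase_eq_zero
    (Finsupp.mem_support_iff.2 hT) hxT hboundary
  exact Finsupp.mem_support_iff.1 hρ (pushOff_apply_eq_zero_of_notMem (hσT.trans hTρ) hxρ)

theorem pushOff_mem_supported (hS : S ∈ Finsupp.supported (ZMod 2) (ZMod 2) s)
    (h : ∀ T ∈ s, σ ⊆ T → x ∉ T → ∀ y ∈ insert x T, (insert x T).erase y ∈ s) :
    pushOff σ x S ∈ Finsupp.supported (ZMod 2) (ZMod 2) s := by
  refine add_mem hS (boundary_mem_supported (s := {R | ∀ y ∈ R, R.erase y ∈ s})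
    (cone_mem_supported (s := {T ∈ s | σ ⊆ T ∧ x ∉ T}) ?_ ?_) fun R hR => hR)
  · intro T hT
    rw [mem_coe, Finsupp.support_filter, mem_filter] at hT
    exact ⟨hS hT.1, hT.2⟩
  · rintro T ⟨hT, hσT, hxT⟩
    exact h T hT hσT hxT

/-- The chains modulo 2 that bound a chain of faces of `L` with `k` vertices. -/
noncomputable def boundaries (L : Set (Finset V)) (k : ℕ) :
    Submodule (ZMod 2) (Finset V →₀ ZMod 2) :=
  (Finsupp.supported (ZMod 2) (ZMod 2) {T ∈ L | #T = k}).map boundary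

end Chains

section Filling

variable [DecidableEq V] {K L L' B : Set (Finset V)} {z : Finset V →₀ ZMod 2} {k : ℕ}

theorem ElemCollapse.mem_boundaries_inter (h : ElemCollapse L L') (hL : IsComplex L)
    (hLfin : L.Finite) (hB : IsComplex B) (hcc : ∀ T ∈ constraintComplex L B, #T ≠ k)
    (hz : z ∈ boundaries (L ∩ B) k) (hzL' : z ∈ Finsupp.supported (ZMod 2) (ZMod 2) L') :
    z ∈ boundaries (L' ∩ B) k := by
  obtain ⟨σ, F, hvia⟩ := h
  obtain ⟨S, hS, rfl⟩ := hz
  obtain ⟨x, hxF, hxσ⟩ := exists_of_ssubset hvia.ssubset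
  have hFL : F ∈ L := hvia.2.2.1.1
  have hboundary : ∀ ρ, σ ⊆ ρ → boundary S ρ = 0 := fun ρ hσρ =>
    Finsupp.notMem_support_iff.1 fun hρ => (hvia.mem_iff.1 (hzL' hρ)).2 hσρ
  have hpush : pushOff σ x S ∈ Finsupp.supported (ZMod 2) (ZMod 2) {T ∈ L ∩ B | #T = k} := by
    refine pushOff_mem_supported hS ?_
    rintro T ⟨⟨hTL, hTB⟩, hTk⟩ hσT hxT y hy
    have hTF : T ⊆ F := hvia.subset_facet hLfin hTL hσT
    have hFB : F ∈ B := of_not_not fun hFB => hcc T ⟨hTB, F, hFL, hFB, hTF⟩ hTk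
    have hcard : #((insert x T).erase y) = #T := by
      rw [card_erase_of_mem hy, card_insert_of_notMem hxT, Nat.add_sub_cancel]
    have hsub : (insert x T).erase y ⊆ F :=
      (erase_subset _ _).trans (insert_subset hxF hTF)
    have hne : (insert x T).erase y ≠ ∅ := by
      rw [← card_pos.trans nonempty_iff_ne_empty, hcard, card_pos]
      exact nonempty_iff_ne_empty.2 (hL.1 T hTL)
    exact ⟨⟨hL.2 F hFL _ hsub hne, hB.2 F hFB _ hsub hne⟩, hcard.trans hTk⟩
  refine ⟨pushOff σ x S, fun T hT => ?_, boundary_pushOff σ x S⟩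
  obtain ⟨⟨hTL, hTB⟩, hTk⟩ := hpush hT
  have hσT : ¬ σ ⊆ T := fun hσT =>
    Finsupp.mem_support_iff.1 hT (pushOff_apply_eq_zero hxσ hboundary hσT)
  exact ⟨⟨hvia.mem_iff.2 ⟨hTL, hσT⟩, hTB⟩, hTk⟩

theorem mem_boundaries_inter_of_collapses (h : ReflTransGen ElemCollapse K L) (hK : IsComplex K)
    (hKfin : K.Finite) (hB : IsComplex B) (hcc : ∀ T ∈ constraintComplex K B, #T ≠ k)
    (hz : z ∈ boundaries (K ∩ B) k) (hzL : z ∈ Finsupp.supported (ZMod 2) (ZMod 2) L) :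
    z ∈ boundaries (L ∩ B) k := by
  induction h with
  | refl => exact hz
  | @tail M L hKM hML ih =>
    have hMK : M ⊆ K := subset_of_collapses hKM
    have hLM : L ⊆ M := subset_of_collapses (.single hML)
    exact hML.mem_boundaries_inter (isComplex_of_collapses hKM hK) (hKfin.subset hMK) hB
      (fun T hT => hcc T (constraintComplex_mono hMK hT)) (ih (hzL.trans hLM)) hzL

end Filling

section BoundaryJoin

variable [DecidableEq V] {K L : Set (Finset V)} {ω A : Finset V} {x : V}

/-- The join of the boundary of the simplex `ω` with the full simplex on `A`, which generalizes the
bipyramid. It is a join when `ω` and `A` are disjoint. -/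
def boundaryJoin (ω A : Finset V) : Set (Finset V) :=
  {F | F ≠ ∅ ∧ F ⊆ ω ∪ A ∧ ¬ ω ⊆ F}

theorem bipyramid_eq_boundaryJoin (u v w ap am : V) :
    bipyramid u v w ap am = boundaryJoin {u, v, w} {ap, am} := by
  simp only [bipyramid, boundaryJoin, insert_union, singleton_union]

theorem isComplex_boundaryJoin (ω A : Finset V) : IsComplex (boundaryJoin ω A) :=
  ⟨fun _ hσ => hσ.1, fun _ hσ _ hτσ hτ => ⟨hτ, hτσ.trans hσ.2.1, fun h => hσ.2.2 (h.trans hτσ)⟩⟩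

theorem insert_erase_mem_boundaryJoin {a : V} (ha : a ∈ A) (haω : a ∉ ω) (hx : x ∈ ω) :
    insert a (ω.erase x) ∈ boundaryJoin ω A := by
  refine ⟨insert_ne_empty _ _, insert_subset (mem_union_right _ ha)
    ((erase_subset _ _).trans subset_union_left), fun h => ?_⟩
  exact (mem_insert.1 (h hx)).elim (fun hxa => haω (hxa ▸ hx)) (notMem_erase x ω)

theorem card_insert_erase_of_notMem {a : V} (haω : a ∉ ω) (hx : x ∈ ω) :
    #(insert a (ω.erase x)) = #ω := by
  rw [card_insert_of_notMem fun h => haω (mem_of_mem_erase h), card_erase_add_one hx]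

theorem exists_eq_insert_erase_of_mem_boundaryJoin {T : Finset V} {y : V}
    (hT : T ∈ boundaryJoin ω A) (hx : x ∈ ω) (hy : y ∈ T) (hyT : T.erase y = ω.erase x) :
    ∃ a ∈ A, a ∉ ω ∧ T = insert a (ω.erase x) := by
  have hTy : T = insert y (ω.erase x) := by rw [← hyT, insert_erase hy]
  have hyω : y ∉ ω := by
    intro hyω
    have hyx : y = x := of_not_not fun h => notMem_erase y T (hyT ▸ mem_erase.2 ⟨h, hyω⟩)
    exact hT.2.2 (by rw [hTy, hyx, insert_erase hx])
  exact ⟨y, (mem_union.1 (hT.2.1 hy)).resolve_left hyω, hyω, hTy⟩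

theorem boundary_simplex_mem_boundaries_boundaryJoin {a : V} (ha : a ∈ A) (haω : a ∉ ω) :
    boundary (Finsupp.single ω 1) ∈ boundaries (boundaryJoin ω A) #ω := by
  refine ⟨cone a (boundary (Finsupp.single ω 1)), cone_mem_supported
    (boundary_single_mem_supported (t := {ρ | ∃ x ∈ ω, ω.erase x = ρ}) fun x hx => ⟨x, hx, rfl⟩) ?_,
    ?_⟩
  · rintro _ ⟨x, hx, rfl⟩
    exact ⟨insert_erase_mem_boundaryJoin ha haω hx, card_insert_erase_of_notMem haω hx⟩
  · rw [boundary_cone (boundary_single_mem_supported fun _ _ h => haω (mem_of_mem_erase h)),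
      boundary_boundary, map_zero, add_zero]

theorem exists_insert_erase_mem_of_collapses (h : ReflTransGen ElemCollapse K L) (hK : IsComplex K)
    (hKfin : K.Finite) (hBK : boundaryJoin ω A ⊆ K)
    (hcc : ∀ T ∈ constraintComplex K (boundaryJoin ω A), #T ≠ #ω) (hA : ¬ A ⊆ ω)
    (hL : ∀ y ∈ ω, ω.erase y ∈ L) (hx : x ∈ ω) :
    ∃ a ∈ A, a ∉ ω ∧ insert a (ω.erase x) ∈ L := by
  obtain ⟨a₀, ha₀, ha₀ω⟩ := not_subset.1 hA
  obtain ⟨S, hS, hSω⟩ : boundary (Finsupp.single ω 1) ∈ boundaries (L ∩ boundaryJoin ω A) #ω := by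
    refine mem_boundaries_inter_of_collapses h hK hKfin (isComplex_boundaryJoin ω A) hcc ?_
      (boundary_single_mem_supported hL)
    rw [Set.inter_eq_right.2 hBK]
    exact boundary_simplex_mem_boundaries_boundaryJoin ha₀ ha₀ω
  have hSx : boundary S (ω.erase x) ≠ 0 := by
    rw [hSω, boundary_single_apply_erase hx]
    exact one_ne_zero
  obtain ⟨T, hT, y, hy, hyT⟩ := exists_erase_eq_of_boundary_apply_ne_zero hSx
  obtain ⟨⟨hTL, hTB⟩, -⟩ := hS hT
  obtain ⟨a, ha, haω, rfl⟩ := exists_eq_insert_erase_of_mem_boundaryJoin hTB hx hy hyT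
  exact ⟨a, ha, haω, hTL⟩

theorem insert_erase_notMem_of_facet_notMem {L' : Set (Finset V)} {σ F : Finset V} {a : V}
    (h : ElemCollapseVia L L' σ F) (hLfin : L.Finite) (hF : F ∉ boundaryJoin ω A)
    (hcc : ∀ T ∈ constraintComplex L (boundaryJoin ω A), #T ≠ #ω) (ha : a ∈ A) (haω : a ∉ ω)
    (hx : x ∈ ω) (hσ : σ ⊆ insert a (ω.erase x)) : insert a (ω.erase x) ∉ L :=
  h.notMem_of_facet_notMem hLfin hF (insert_erase_mem_boundaryJoin ha haω hx) hσ
    fun hT => hcc _ hT (card_insert_erase_of_notMem haω hx)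

theorem bipyramid_blocked_general {c : ℕ → Set (Finset V)} {m : ℕ} (hK : IsComplex K)
    (hKfin : K.Finite) (hBK : boundaryJoin ω A ⊆ K)
    (hcc : ∀ T ∈ constraintComplex K (boundaryJoin ω A), #T ≠ #ω) (hA : ¬ A ⊆ ω) (hx : x ∈ ω)
    (hc0 : c 0 = K) (hc : ∀ t < m, ElemCollapse (c t) (c (t + 1)))
    (hremoved : ∀ a ∈ A, a ∉ ω → ∃ t ≤ m, ∃ σ F, ElemCollapseVia (c t) (c (t + 1)) σ F ∧
      σ ⊆ insert a (ω.erase x) ∧ F ∉ boundaryJoin ω A) :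
    ¬ ∀ y ∈ ω, ω.erase y ∈ c m := by
  intro hω
  have hcollapse : ∀ {t}, t ≤ m → ReflTransGen ElemCollapse K (c t) := fun ht =>
    hc0 ▸ collapses_of_forall_lt hc (Nat.zero_le _) ht
  obtain ⟨a, ha, haω, ham⟩ := exists_insert_erase_mem_of_collapses (hcollapse le_rfl) hK hKfin hBK
    hcc hA hω hx
  obtain ⟨t, ht, σ, F, hvia, hσ, hF⟩ := hremoved a ha haω
  have htK : c t ⊆ K := subset_of_collapses (hcollapse ht)
  have hmt : c m ⊆ c t := subset_of_collapses (collapses_of_forall_lt hc ht le_rfl)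
  exact insert_erase_notMem_of_facet_notMem hvia (hKfin.subset htK) hF
    (fun T hT => hcc T (constraintComplex_mono htK hT)) ha haω hx hσ (hmt ham)

end BoundaryJoin

section Bipyramid

variable [DecidableEq V] {u v w ap am : V}

theorem nodup_of_card_eq_five (h : #{u, v, w, ap, am} = 5) : [u, v, w, ap, am].Nodup := by
  rw [← Multiset.coe_nodup, ← Multiset.toFinset_card_eq_card_iff_nodup]
  simpa using h

theorem forall_erase_mem_of_edges_mem {L : Set (Finset V)} (h : [u, v, w].Nodup)
    (huv : {u, v} ∈ L) (huw : {u, w} ∈ L) (hvw : {v, w} ∈ L) :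
    ∀ y ∈ ({u, v, w} : Finset V), erase {u, v, w} y ∈ L := by
  have hu : erase {u, v, w} u = ({v, w} : Finset V) := by grind
  have hv : erase {u, v, w} v = ({u, w} : Finset V) := by grind
  have hw : erase {u, v, w} w = ({u, v} : Finset V) := by grind
  simp [hu, hv, hw, huv, huw, hvw]

theorem card_ne_card_of_mem_five_edges {T : Finset V} (hnodup : [u, v, w].Nodup)
    (h : T ∈ ({{u}, {v}, {w}, {ap}, {am}, {u, v}, {u, w}, {v, w}, {v, ap}, {v, am}} :
      Set (Finset V))) : #T ≠ #{u, v, w} := by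
  have hω : #{u, v, w} = 3 := by simpa using List.toFinset_card_of_nodup hnodup
  have hT : #T ≤ 2 := by
    simp only [Set.mem_insert_iff, Set.mem_singleton_iff] at h
    obtain rfl | rfl | rfl | rfl | rfl | rfl | rfl | rfl | rfl | rfl := h <;>
      simp [card_le_two]
  omega

theorem not_apexes_subset (h : [u, v, w, ap, am].Nodup) :
    ¬ ({ap, am} : Finset V) ⊆ {u, v, w} := by
  intro hsub
  have hap : ap ∈ ({u, v, w} : Finset V) := hsub (mem_insert_self ap _)
  grind

theorem edge_subset_insert_erase (h : [u, v, w].Nodup) (a : V) :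
    {v, a} ⊆ insert a (erase {u, v, w} w) := by
  grind

end Bipyramid

/-- Lemma 2.2(iii). -/
theorem bipyramid_blocked [DecidableEq V] (u v w ap am : V)
    (hdist : ({u, v, w, ap, am} : Finset V).card = 5)
    (K : Set (Finset V)) (hK : IsComplex K) (hKfin : K.Finite)
    (hBK : bipyramid u v w ap am ⊆ K)
    (hcc : constraintComplex K (bipyramid u v w ap am) =
      ({{u}, {v}, {w}, {ap}, {am}, {u, v}, {u, w}, {v, w}, {v, ap}, {v, am}} :
        Set (Finset V))) :
    ¬ ∃ (c : ℕ → Set (Finset V)) (n : ℕ), c 0 = K ∧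
      (∀ t < n, ElemCollapse (c t) (c (t + 1))) ∧
      (∃ i < n,
        ({v, ap} : Finset V) ∈ c i ∧ ({v, ap} : Finset V) ∉ c (i + 1) ∧
        (∃ σ F, ElemCollapseVia (c i) (c (i + 1)) σ F ∧ F.card = 3 ∧
          F ∉ bipyramid u v w ap am) ∧
        ({u, v} : Finset V) ∈ c (i + 1) ∧ ({u, w} : Finset V) ∈ c (i + 1) ∧
        ({v, w} : Finset V) ∈ c (i + 1)) ∧
      (∃ j < n,
        ({v, am} : Finset V) ∈ c j ∧ ({v, am} : Finset V) ∉ c (j + 1) ∧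
        (∃ σ F, ElemCollapseVia (c j) (c (j + 1)) σ F ∧ F.card = 3 ∧
          F ∉ bipyramid u v w ap am) ∧
        ({u, v} : Finset V) ∈ c (j + 1) ∧ ({u, w} : Finset V) ∈ c (j + 1) ∧
        ({v, w} : Finset V) ∈ c (j + 1)) := by
  rintro ⟨c, n, h0, hc,
    ⟨i, hi, hap, hap', ⟨σ, F, hvia, -, hF⟩, hiuv, hiuw, hivw⟩,
    ⟨j, hj, ham, ham', ⟨σ', F', hvia', -, hF'⟩, hjuv, hjuw, hjvw⟩⟩
  rw [bipyramid_eq_boundaryJoin] at hBK hcc hF hF'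
  have hnodup := nodup_of_card_eq_five hdist
  have hnodup₃ : [u, v, w].Nodup := by grind
  have hcycle : ∀ y ∈ ({u, v, w} : Finset V), erase {u, v, w} y ∈ c (max i j) :=
    max_rec' (fun t => ∀ y ∈ ({u, v, w} : Finset V), erase {u, v, w} y ∈ c t)
      (forall_erase_mem_of_edges_mem hnodup₃
        (hvia.subset hiuv) (hvia.subset hiuw) (hvia.subset hivw))
      (forall_erase_mem_of_edges_mem hnodup₃
        (hvia'.subset hjuv) (hvia'.subset hjuw) (hvia'.subset hjvw))
  refine bipyramid_blocked_general (x := w) hK hKfin hBK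
    (fun T hT => card_ne_card_of_mem_five_edges hnodup₃ (hcc ▸ hT)) (not_apexes_subset hnodup)
    (by simp) h0 (fun t ht => hc t (ht.trans (max_lt hi hj))) ?_ hcycle
  simp only [mem_insert, mem_singleton]
  rintro a (rfl | rfl) -
  · exact ⟨i, le_max_left i j, σ, F, hvia,
      (hvia.subset_of_notMem hap hap').trans (edge_subset_insert_erase hnodup₃ _), hF⟩
  · exact ⟨j, le_max_right i j, σ', F', hvia',
      (hvia'.subset_of_notMem ham ham').trans (edge_subset_insert_erase hnodup₃ _), hF'⟩

end PaperFormal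
end

section
/- Let B be a triangulated 3-ball and let Δ be a 3-face of B with vertices a, b, c, d. Assume the edges {a,d}, {b,d}, {c,d} belong to ∂B, and at least two of the triangles {a,b,d}, {a,c,d}, {b,c,d} do not belong to ∂B. Then Δ is not free for shelling in B; that is, the subcomplex of faces of Δ contained in ∂B does not have polyhedron homeomorphic to a closed 2-dimensional ball. -/
/-!
STATEMENT 5 (Observation 9.3): Let B be a triangulated 3-ball and Δ = {a,b,c,d}
a 3-face of B. If the edges {a,d},{b,d},{c,d} belong to ∂B while at least two of
the triangles {a,b,d},{a,c,d},{b,c,d} do not, then Δ is not free for shelling.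
-/

open scoped Classical

namespace PaperFormal

variable {V : Type*}

/-- `K` is pure of dimension `d`. -/
def PureDim (K : Set (Finset V)) (d : ℕ) : Prop :=
  K.Nonempty ∧ ∀ σ, IsFacet K σ → σ.card = d + 1

/-- The boundary of a pure `d`-dimensional complex `K`. -/
def bdry (K : Set (Finset V)) (d : ℕ) : Set (Finset V) :=
  generatedBy K {σ : Finset V | σ ∈ K ∧ σ.card = d ∧
    ∃! F, F ∈ K ∧ F.card = d + 1 ∧ σ ⊆ F}

/-- The polyhedron of a collection of geometric faces. -/
def poly {N : ℕ} (S : Set (Finset (EuclideanSpace ℝ (Fin N)))) :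
    Set (EuclideanSpace ℝ (Fin N)) :=
  ⋃ σ ∈ S, convexHull ℝ (σ : Set (EuclideanSpace ℝ (Fin N)))

/-- `S` is homeomorphic to the closed `d`-dimensional ball. -/
def IsBallSet {N : ℕ} (d : ℕ) (S : Set (EuclideanSpace ℝ (Fin N))) : Prop :=
  Nonempty (↥S ≃ₜ ↥(Metric.closedBall (0 : EuclideanSpace ℝ (Fin d)) 1))

/-!
If two of the three triangles at `d` are missing from the boundary, then their common edge is a
facet of the complex of boundary faces of the tetrahedron. Hence near the centroid of that edge the
polyhedron is contained in a segment. On the other hand, no nonempty open subset of a ball of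
dimension at least two admits a continuous injection into the line, since removing a point does not
disconnect a real vector space of dimension at least two.
-/

section RealValuedMaps

theorem not_injective_of_continuous_real {E : Type*} [AddCommGroup E] [Module ℝ E]
    [TopologicalSpace E] [ContinuousAdd E] [ContinuousSMul ℝ E] (hE : 1 < Module.rank ℝ E)
    {f : E → ℝ} (hf : Continuous f) : ¬ Function.Injective f := by
  intro hinj
  have : Nontrivial E := (rank_pos_iff_nontrivial (R := ℝ)).1 (zero_lt_one.trans hE)
  obtain ⟨x, y, hxy⟩ : ∃ x y, f x < f y := by
    obtain ⟨x, y, hne⟩ := exists_pair_ne E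
    exact (hinj.ne hne).lt_or_gt.elim (fun h => ⟨x, y, h⟩) fun h => ⟨y, x, h⟩
  obtain ⟨m, hxm, hmy⟩ := exists_between hxy
  obtain ⟨z, rfl⟩ : m ∈ Set.range f := intermediate_value_univ x y hf ⟨hxm.le, hmy.le⟩
  obtain ⟨w, hwz, hfw⟩ : f z ∈ f '' {z}ᶜ :=
    (isConnected_compl_singleton_of_one_lt_rank hE z).isPreconnected.intermediate_value
      (ne_of_apply_ne f hxm.ne) (ne_of_apply_ne f hmy.ne') hf.continuousOn ⟨hxm.le, hmy.le⟩
  exact hwz (hinj hfw)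

variable {E : Type*} [NormedAddCommGroup E] [NormedSpace ℝ E]

theorem not_injective_of_continuous_of_isOpen (hE : 1 < Module.rank ℝ E) {U : Set E}
    (hU : IsOpen U) (hne : U.Nonempty) {f : U → ℝ} (hf : Continuous f) :
    ¬ Function.Injective f := by
  intro hinj
  obtain ⟨q, hq⟩ := hne
  obtain ⟨r, hr, hball⟩ := Metric.isOpen_iff.1 hU q hq
  let u := OpenPartialHomeomorph.univBall q r
  have hu_mem (y : E) : u y ∈ U := hball <| by
    simpa only [u, OpenPartialHomeomorph.univBall_target q hr] using
      u.map_source (x := y) (by simp [u])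
  have hu_cont : Continuous fun y => (⟨u y, hu_mem y⟩ : U) :=
    (OpenPartialHomeomorph.continuous_univBall q r).subtype_mk _
  have hu_inj : Function.Injective fun y => (⟨u y, hu_mem y⟩ : U) := fun x y hxy =>
    u.injOn (by simp [u]) (by simp [u]) (congrArg Subtype.val hxy)
  exact not_injective_of_continuous_real hE (hf.comp hu_cont) (hinj.comp hu_inj)

theorem not_injOn_of_continuous_of_subset_closure_interior (hE : 1 < Module.rank ℝ E)
    {C : Set E} (hC : C ⊆ closure (interior C)) {U : Set C} (hU : IsOpen U) (hne : U.Nonempty)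
    {f : C → ℝ} (hf : Continuous f) : ¬ Set.InjOn f U := by
  intro hinj
  obtain ⟨P, hP, rfl⟩ := isOpen_induced_iff.1 hU
  obtain ⟨x, hxP⟩ := hne
  have hPC : P ∩ interior C ⊆ C := Set.inter_subset_right.trans interior_subset
  refine not_injective_of_continuous_of_isOpen hE (hP.inter isOpen_interior)
    (mem_closure_iff.1 (hC x.2) P hP hxP) (hf.comp (continuous_inclusion hPC)) ?_
  intro y z hyz
  exact Set.inclusion_injective hPC (hinj y.2.1 z.2.1 hyz)

theorem not_injOn_of_homeomorph_closedBall (hE : 1 < Module.rank ℝ E) {X : Type*}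
    [TopologicalSpace X] {c : E} {r : ℝ} (hr : r ≠ 0) (h : X ≃ₜ Metric.closedBall c r)
    {U : Set X} (hU : IsOpen U) (hne : U.Nonempty) {f : X → ℝ} (hf : Continuous f) :
    ¬ Set.InjOn f U := by
  intro hinj
  have hball : Metric.closedBall c r ⊆ closure (interior (Metric.closedBall c r)) := by
    rw [interior_closedBall _ hr, closure_ball _ hr]
  obtain ⟨x, hx⟩ := hne
  refine not_injOn_of_continuous_of_subset_closure_interior hE hball
    (hU.preimage h.symm.continuous) ⟨h x, by simpa using hx⟩ (hf.comp h.symm.continuous) ?_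
  exact hinj.comp h.symm.injective.injOn (Set.mapsTo_preimage _ _)

theorem injOn_dist_left_segment (a b : E) : Set.InjOn (dist a) (segment ℝ a b) := by
  rw [segment_eq_image_lineMap]
  rintro _ ⟨s, hs, rfl⟩ _ ⟨t, ht, rfl⟩ hst
  rw [dist_left_lineMap, dist_left_lineMap, Real.norm_of_nonneg hs.1, Real.norm_of_nonneg ht.1,
    mul_eq_mul_right_iff, dist_eq_zero] at hst
  rcases hst with rfl | rfl
  · rfl
  · simp

end RealValuedMaps

theorem not_isBallSet_of_inter_subset_segment {N n : ℕ} (hn : 2 ≤ n)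
    {X O : Set (EuclideanSpace ℝ (Fin N))} {a b : EuclideanSpace ℝ (Fin N)} (hO : IsOpen O)
    (hne : (X ∩ O).Nonempty) (hXO : X ∩ O ⊆ segment ℝ a b) : ¬ IsBallSet n X := by
  rintro ⟨h⟩
  have hrank : 1 < Module.rank ℝ (EuclideanSpace ℝ (Fin n)) := by
    rw [← Module.finrank_eq_rank, finrank_euclideanSpace_fin]
    exact_mod_cast hn
  obtain ⟨p, hpX, hpO⟩ := hne
  refine not_injOn_of_homeomorph_closedBall hrank one_ne_zero h
    (hO.preimage continuous_subtype_val) ⟨⟨p, hpX⟩, hpO⟩ (f := fun x => dist a x) (by fun_prop) ?_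
  intro x hx y hy hxy
  exact Subtype.ext (injOn_dist_left_segment a b (hXO ⟨x.2, hx⟩) (hXO ⟨y.2, hy⟩) hxy)

section Faces

theorem subset_of_centroid_mem_affineSpan {k W P : Type*} [DivisionRing k] [CharZero k]
    [AddCommGroup W] [Module k W] [AddTorsor W P] {s : Finset P} {t : Set P}
    (hs : AffineIndependent k ((↑) : s → P)) (h : s.centroid k id ∈ affineSpan k (s ∩ t)) :
    ↑s ⊆ t := by
  intro v hvs
  by_contra hvt
  have hne : s.Nonempty := ⟨v, hvs⟩
  rw [← Finset.centroid_univ, Finset.centroid_def, ← Subtype.image_preimage_coe] at h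
  have hweight := hs.eq_zero_of_affineCombination_mem_affineSpan
    (Finset.sum_centroidWeights_eq_one_of_nonempty k _ hne.attach) h
    (Finset.mem_univ ⟨v, hvs⟩) hvt
  simp [hne.ne_empty] at hweight

variable {𝕜 E : Type*} [Field 𝕜] [LinearOrder 𝕜] [IsStrictOrderedRing 𝕜] [AddCommGroup E]
  [Module 𝕜 E]

theorem subset_of_centroid_mem_convexHull {K : Geometry.SimplicialComplex 𝕜 E} {s t : Finset E}
    (hs : s ∈ K.faces) (ht : t ∈ K.faces) (h : s.centroid 𝕜 id ∈ convexHull 𝕜 (t : Set E)) :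
    s ⊆ t := by
  have hmem : s.centroid 𝕜 id ∈ convexHull 𝕜 (s ∩ t : Set E) :=
    K.inter_subset_convexHull hs ht
      ⟨s.centroid_mem_convexHull (K.nonempty_of_mem_faces hs), h⟩
  exact_mod_cast subset_of_centroid_mem_affineSpan (K.indep hs)
    (convexHull_subset_affineSpan _ hmem)

theorem exists_convexHull_eq_segment {s : Finset E} (hne : s.Nonempty) (hcard : s.card ≤ 2) :
    ∃ a b, convexHull 𝕜 (s : Set E) = segment 𝕜 a b := by
  obtain h | h : s.card = 1 ∨ s.card = 2 := by have := hne.card_pos; omega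
  · obtain ⟨a, rfl⟩ := Finset.card_eq_one.1 h
    exact ⟨a, a, by simp⟩
  · obtain ⟨a, b, -, rfl⟩ := Finset.card_eq_two.1 h
    exact ⟨a, b, by rw [Finset.coe_pair, convexHull_pair]⟩

end Faces

section Polyhedron

variable {N : ℕ} {B : Geometry.SimplicialComplex ℝ (EuclideanSpace ℝ (Fin N))}
  {S : Set (Finset (EuclideanSpace ℝ (Fin N)))} {e : Finset (EuclideanSpace ℝ (Fin N))}

theorem exists_isOpen_inter_poly_subset_convexHull (hSB : S ⊆ B.faces) (hfin : S.Finite)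
    (he : IsFacet S e) :
    ∃ O, IsOpen O ∧ (poly S ∩ O).Nonempty ∧ poly S ∩ O ⊆ convexHull ℝ e := by
  refine ⟨(poly (S \ {e}))ᶜ, ?_, ⟨e.centroid ℝ id, ?_, ?_⟩, ?_⟩
  · exact (hfin.sdiff.isClosed_biUnion fun σ _ =>
      σ.finite_toSet.isClosed_convexHull ℝ).isOpen_compl
  · exact Set.mem_biUnion he.1 (e.centroid_mem_convexHull (B.nonempty_of_mem_faces (hSB he.1)))
  · intro hmem
    obtain ⟨σ, ⟨hσS, hσe⟩, hσ⟩ := Set.mem_iUnion₂.1 hmem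
    have heσ : e ⊆ σ := subset_of_centroid_mem_convexHull (hSB he.1) (hSB hσS) hσ
    exact hσe (he.2 σ hσS heσ).symm
  · rintro x ⟨hxS, hx⟩
    obtain ⟨σ, hσS, hxσ⟩ := Set.mem_iUnion₂.1 hxS
    obtain rfl : σ = e := by_contra fun hσe => hx (Set.mem_biUnion ⟨hσS, hσe⟩ hxσ)
    exact hxσ

theorem not_isBallSet_poly_of_isFacet {n : ℕ} (hn : 2 ≤ n) (hSB : S ⊆ B.faces) (hfin : S.Finite)
    (he : IsFacet S e) (hcard : e.card ≤ 2) : ¬ IsBallSet n (poly S) := by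
  obtain ⟨O, hO, hne, hOe⟩ := exists_isOpen_inter_poly_subset_convexHull hSB hfin he
  obtain ⟨a, b, hab⟩ :=
    exists_convexHull_eq_segment (𝕜 := ℝ) (B.nonempty_of_mem_faces (hSB he.1)) hcard
  exact not_isBallSet_of_inter_subset_segment hn hO hne (hab ▸ hOe)

end Polyhedron

section Subcomplexes

variable {K : Set (Finset V)}

theorem isRelLowerSet_generatedBy {P : Finset V → Prop} (hK : IsRelLowerSet K P)
    (S : Set (Finset V)) : IsRelLowerSet (generatedBy K S) P := by
  rintro σ ⟨hσ, θ, hθ, hσθ⟩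
  exact ⟨(hK hσ).1, fun τ hτσ hτ => ⟨(hK hσ).2 hτσ hτ, θ, hθ, hτσ.trans hσθ⟩⟩

variable [DecidableEq V]

theorem isFacet_of_forall_insert_notMem (hK : IsRelLowerSet K Finset.Nonempty)
    {e Δ : Finset V} (he : e ∈ K) (heΔ : e ⊆ Δ) (hins : ∀ v ∈ Δ \ e, insert v e ∉ K) :
    IsFacet {σ | σ ∈ K ∧ σ ⊆ Δ} e := by
  refine ⟨⟨he, heΔ⟩, fun τ ⟨hτ, hτΔ⟩ heτ => heτ.antisymm fun v hvτ => ?_⟩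
  by_contra hve
  exact hins v (Finset.mem_sdiff.2 ⟨hτΔ hvτ, hve⟩)
    ((hK hτ).2 (Finset.insert_subset hvτ heτ) (Finset.insert_nonempty v e))

theorem isFacet_pair (hK : IsRelLowerSet K Finset.Nonempty) {x y z d : V} (hxd : {x, d} ∈ K)
    (hxyd : {x, y, d} ∉ K) (hxzd : {x, z, d} ∉ K) :
    IsFacet {σ | σ ∈ K ∧ σ ⊆ {x, y, z, d}} {x, d} := by
  refine isFacet_of_forall_insert_notMem hK hxd (by grind) fun v hv => ?_
  obtain rfl | rfl : v = y ∨ v = z := by grind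
  · rwa [Finset.insert_comm]
  · rwa [Finset.insert_comm]

theorem exists_isFacet_card_le_two (hK : IsRelLowerSet K Finset.Nonempty) {a b c d : V}
    (had : {a, d} ∈ K) (hbd : {b, d} ∈ K) (hcd : {c, d} ∈ K)
    (htri : ∃ t₁ t₂ : Finset V, t₁ ≠ t₂ ∧
      t₁ ∈ ({{a, b, d}, {a, c, d}, {b, c, d}} : Set (Finset V)) ∧
      t₂ ∈ ({{a, b, d}, {a, c, d}, {b, c, d}} : Set (Finset V)) ∧ t₁ ∉ K ∧ t₂ ∉ K) :
    ∃ e, IsFacet {σ | σ ∈ K ∧ σ ⊆ {a, b, c, d}} e ∧ e.card ≤ 2 := by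
  have hstar {x y z : V} (hxd : {x, d} ∈ K) (hΔ : ({a, b, c, d} : Finset V) = {x, y, z, d})
      (hxyd : {x, y, d} ∉ K) (hxzd : {x, z, d} ∉ K) :
      ∃ e, IsFacet {σ | σ ∈ K ∧ σ ⊆ {a, b, c, d}} e ∧ e.card ≤ 2 :=
    ⟨{x, d}, hΔ ▸ isFacet_pair hK hxd hxyd hxzd, Finset.card_le_two⟩
  obtain ⟨habd, hacd⟩ | ⟨habd, hbcd⟩ | ⟨hacd, hbcd⟩ :
      ({a, b, d} ∉ K ∧ {a, c, d} ∉ K) ∨ ({a, b, d} ∉ K ∧ {b, c, d} ∉ K) ∨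
        ({a, c, d} ∉ K ∧ {b, c, d} ∉ K) := by
    obtain ⟨t₁, t₂, hne, rfl | rfl | rfl, rfl | rfl | rfl, ht₁, ht₂⟩ := htri <;> tauto
  · exact hstar had rfl habd hacd
  · exact hstar hbd (Finset.insert_comm ..) (Finset.insert_comm a b {d} ▸ habd) hbcd
  · exact hstar hcd (by grind) (Finset.insert_comm a c {d} ▸ hacd)
      (Finset.insert_comm b c {d} ▸ hbcd)

end Subcomplexes

theorem tetrahedron_not_free_general {N n : ℕ} (hn : 2 ≤ n)
    {B : Geometry.SimplicialComplex ℝ (EuclideanSpace ℝ (Fin N))}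
    {K : Set (Finset (EuclideanSpace ℝ (Fin N)))} (hKB : K ⊆ B.faces)
    (hK : IsRelLowerSet K Finset.Nonempty) {a b c d : EuclideanSpace ℝ (Fin N)}
    (had : {a, d} ∈ K) (hbd : {b, d} ∈ K) (hcd : {c, d} ∈ K)
    (htri : ∃ t₁ t₂ : Finset (EuclideanSpace ℝ (Fin N)), t₁ ≠ t₂ ∧
      t₁ ∈ ({{a, b, d}, {a, c, d}, {b, c, d}} : Set (Finset (EuclideanSpace ℝ (Fin N)))) ∧
      t₂ ∈ ({{a, b, d}, {a, c, d}, {b, c, d}} : Set (Finset (EuclideanSpace ℝ (Fin N)))) ∧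
      t₁ ∉ K ∧ t₂ ∉ K) :
    ¬ IsBallSet n (poly {σ | σ ∈ K ∧ σ ⊆ {a, b, c, d}}) := by
  obtain ⟨e, he, hcard⟩ := exists_isFacet_card_le_two hK had hbd hcd htri
  have hfin : {σ | σ ∈ K ∧ σ ⊆ {a, b, c, d}}.Finite :=
    (Finset.finite_toSet (Finset.powerset {a, b, c, d})).subset fun σ hσ =>
      Finset.mem_powerset.2 hσ.2
  exact not_isBallSet_poly_of_isFacet hn (fun σ hσ => hKB hσ.1) hfin he hcard

/-- Observation 9.3. -/
theorem tetrahedron_not_free {N : ℕ}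
    (B : Geometry.SimplicialComplex ℝ (EuclideanSpace ℝ (Fin N)))
    (hfin : B.faces.Finite)
    (hball : IsBallSet 3 B.space)
    (hpure : PureDim B.faces 3)
    (a b c d : EuclideanSpace ℝ (Fin N))
    (hcard : ({a, b, c, d} : Finset (EuclideanSpace ℝ (Fin N))).card = 4)
    (hΔ : ({a, b, c, d} : Finset (EuclideanSpace ℝ (Fin N))) ∈ B.faces)
    (had : ({a, d} : Finset (EuclideanSpace ℝ (Fin N))) ∈ bdry B.faces 3)
    (hbd : ({b, d} : Finset (EuclideanSpace ℝ (Fin N))) ∈ bdry B.faces 3)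
    (hcd : ({c, d} : Finset (EuclideanSpace ℝ (Fin N))) ∈ bdry B.faces 3)
    (h2 : ∃ t₁ t₂ : Finset (EuclideanSpace ℝ (Fin N)), t₁ ≠ t₂ ∧
      t₁ ∈ ({{a, b, d}, {a, c, d}, {b, c, d}} :
        Set (Finset (EuclideanSpace ℝ (Fin N)))) ∧
      t₂ ∈ ({{a, b, d}, {a, c, d}, {b, c, d}} :
        Set (Finset (EuclideanSpace ℝ (Fin N)))) ∧
      t₁ ∉ bdry B.faces 3 ∧ t₂ ∉ bdry B.faces 3) :
    ¬ IsBallSet 2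
      (poly {σ | σ ∈ bdry B.faces 3 ∧
        σ ⊆ ({a, b, c, d} : Finset (EuclideanSpace ℝ (Fin N)))}) :=
  tetrahedron_not_free_general le_rfl (fun _ hσ => hσ.1)
    (isRelLowerSet_generatedBy B.isRelLowerSet_faces _) had hbd hcd h2

end PaperFormal
end

section
/- Let k ≥ 2 and let C be the conjunction cone on vertices d, w₋, u₁,…,u_k, namely the simplicial complex generated by the k−1 tetrahedra Δ_i := {d,w₋,u_i,u_{i+1}} for i = 1,…,k−1; write ε₀ := {w₋,u₁}, ε_i := {u_i,u_{i+1}} for i = 1,…,k−1, and ε_k := {u_k,w₋}. Let B be a triangulated 3-ball containing C as a subcomplex such that every edge of C containing d belongs to ∂B and none of the triangles ε_i ∪ {d} (i = 0,…,k) belongs to ∂B; assume that for each i ∈ {0,…,k} there is a unique 3-face Δ'_i of B not belonging to C that contains ε_i ∪ {d}. Then in any shelling down of B to a single 3-face, either Δ'_0 is shelled before Δ_1, or all of Δ'_1,…,Δ'_k are shelled before Δ_1 (here 'F is shelled before G' means F appears earlier than G in the shelling sequence, or F appears in the sequence while G is the final remaining 3-face). -/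
/-!
STATEMENT 6 (Lemma 9.2): conjunction cone. In any shelling down of B to a single
3-face, before shelling Δ_1 either Δ'_0 is shelled, or all Δ'_1,…,Δ'_k are.
-/

open scoped Classical

namespace PaperFormal

variable {V : Type*}

/-- `K[θ_1,…,θ_m]` for the list `l = [θ_1,…,θ_m]`. -/
def generatedByL (K : Set (Finset V)) (l : List (Finset V)) : Set (Finset V) :=
  {τ ∈ K | ∃ θ ∈ l, τ ⊆ θ}

/-- The shelling-down condition for the first `k` entries of `l`. -/
def DownSteps (K : Set (Finset V)) (d : ℕ) (l : List (Finset V)) (k : ℕ) : Prop :=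
  ∀ i, i < k →
    PureDim (generatedByL K [l.getD i ∅] ∩ generatedByL K (l.drop (i + 1))) (d - 1)

/-- The first `k` entries of `l` (which enumerates all facets of `K`) form a
shelling down of `K`. -/
def IsShellingDown (K : Set (Finset V)) (d : ℕ) (l : List (Finset V)) (k : ℕ) : Prop :=
  l.Nodup ∧ (∀ σ, σ ∈ l ↔ IsFacet K σ) ∧ k + 1 ≤ l.length ∧ DownSteps K d l k

/-- `F` is shelled before `G` in the (full) shelling order `l`: `F` appears
strictly earlier than `G` in `l` (if `G` is the final remaining facet it sits at
the last position of `l`). -/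
def Before (l : List (Finset V)) (F G : Finset V) : Prop :=
  ∃ i j : ℕ, i < j ∧ j < l.length ∧ l.getD i ∅ = F ∧ l.getD j ∅ = G

/-!
By invariance of domain a triangle of a triangulated 3-ball lies in at most two tetrahedra. Hence
the link of a boundary edge `e` is a graph with all degrees at most two and a vertex of degree one,
so it has more vertices than edges. A shelling down removes the edges of this link one by one, each
of them but the last sharing a vertex with a later one; counting vertices from the end, a removed
edge never has both its end points covered by later edges. Thus, if a tetrahedron `F ⊇ e` is removed
before one of its two neighbours around `e`, then its other neighbour around `e` is removed even
earlier.

If `Δ' 0` is not removed before `Δ 1`, applying this around `{d, w}` shows that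
`Δ 1, Δ 2, …, Δ (k - 1), Δ' k` are removed in the reverse of this order. Applying it around
`{d, u i}`, where `Δ i` is removed before `Δ (i - 1)` (or `Δ' 0`), shows that `Δ' i` is removed
before `Δ i`.
-/

section Retraction

open Metric Set MeasureTheory
open scoped NNReal Topology

theorem exists_extrapolation_weights (n : ℕ) (a : ℝ) {S : Set ℝ} (hS : S.Infinite) :
    ∃ (s : Finset ℝ) (c : ℝ → ℝ), ↑s ⊆ S ∧
      ∀ p : Polynomial ℝ, p.natDegree ≤ n → p.eval a = ∑ t ∈ s, c t * p.eval t := by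
  obtain ⟨s, hsS, hcard⟩ := hS.exists_subset_card_eq (n + 1)
  refine ⟨s, fun t => (Lagrange.basis s id t).eval a, hsS, fun p hp => ?_⟩
  have hdeg : p.degree < s.card := by
    rw [hcard]
    exact (Polynomial.degree_le_of_natDegree_le hp).trans_lt (by exact_mod_cast n.lt_succ_self)
  conv_lhs => rw [Lagrange.eq_interpolate (injOn_id _) hdeg, Lagrange.interpolate_apply]
  simp [Polynomial.eval_finsetSum, mul_comm]

theorem image_eq_of_eqOn_frontier {X : Type*} [TopologicalSpace X] [T2Space X] {U : Set X}
    {g : X → X} (hU : IsOpen U) (hUconn : IsPreconnected U) (hUcpt : IsCompact (closure U))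
    (hUne : U.Nonempty) (hg : ContinuousOn g (closure U)) (hgopen : IsOpen (g '' U))
    (hmaps : MapsTo g U U) (hfix : EqOn g id (frontier U)) : g '' U = U := by
  refine hmaps.image_subset.antisymm ?_
  refine hUconn.subset_left_of_subset_union hgopen
    (hUcpt.image_of_continuousOn hg).isClosed.isOpen_compl
    (disjoint_compl_right_iff_subset.2 (image_mono subset_closure)) (fun y hy => ?_) ?_
  · refine (em (y ∈ g '' closure U)).imp_left ?_
    rintro ⟨x, hx, rfl⟩
    refine ⟨x, by_contra fun hxU => hxU ?_, rfl⟩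
    have hgx : g x = x := hfix ⟨hx, by rwa [hU.interior_eq]⟩
    rwa [hgx] at hy
  · obtain ⟨x, hx⟩ := hUne
    exact ⟨g x, hmaps hx, x, hx, rfl⟩

variable {E : Type*} [NormedAddCommGroup E] [NormedSpace ℝ E]

theorem approximatesLinearOn_refl_of_norm_fderiv_sub_one_le {g : E → E} {U : Set E} {c : ℝ≥0}
    (hU : Convex ℝ U) (hg : ∀ x ∈ U, DifferentiableAt ℝ g x)
    (hc : ∀ x ∈ U, ‖fderiv ℝ g x - 1‖₊ ≤ c) :
    ApproximatesLinearOn g (ContinuousLinearEquiv.refl ℝ E : E →L[ℝ] E) U c := by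
  rw [ApproximatesLinearOn.approximatesLinearOn_iff_lipschitzOnWith]
  refine hU.lipschitzOnWith_of_nnnorm_fderiv_le
    (fun x hx => (hg x hx).sub (ContinuousLinearMap.differentiableAt _)) fun x hx => ?_
  rw [fderiv_sub (hg x hx) (ContinuousLinearMap.differentiableAt _), ContinuousLinearMap.fderiv]
  exact hc x hx

theorem lt_inv_nnnorm_refl_symm [Nontrivial E] {c : ℝ≥0} (hc : c < 1) :
    c < ‖((ContinuousLinearEquiv.refl ℝ E).symm : E →L[ℝ] E)‖₊⁻¹ := by
  simpa using hc

variable [FiniteDimensional ℝ E]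

theorem exists_polynomial_eval_eq_det_one_add_smul (A : E →L[ℝ] E) :
    ∃ p : Polynomial ℝ, p.natDegree ≤ Module.finrank ℝ E ∧
      ∀ t : ℝ, p.eval t = (1 + t • A).det := by
  let b := Module.finBasis ℝ E
  let M := LinearMap.toMatrix b b A
  refine ⟨((Polynomial.X : Polynomial ℝ) • M.map Polynomial.C +
    (1 : Matrix _ _ ℝ).map Polynomial.C).det, ?_, fun t => ?_⟩
  · simpa using Polynomial.natDegree_det_X_add_C_le M 1
  · have hM : LinearMap.toMatrix b b (1 + t • A : E →L[ℝ] E) = t • M + 1 := by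
      rw [add_comm, ContinuousLinearMap.toLinearMap_add, ContinuousLinearMap.toLinearMap_smul,
        map_add, map_smul]
      exact congrArg _ (LinearMap.toMatrix_one b)
    rw [← Polynomial.coe_evalRingHom, RingHom.map_det, ContinuousLinearMap.det,
      ← LinearMap.det_toMatrix b, hM]
    congr 1
    ext i j
    rcases eq_or_ne i j with rfl | hij <;> simp [mul_comm t, *]

theorem det_one_add_pos_of_norm_lt_one {A : E →L[ℝ] E} (hA : ‖A‖ < 1) : 0 < (1 + A).det := by
  have := FiniteDimensional.complete ℝ E
  have hne : ∀ s ∈ Icc (0 : ℝ) 1, (1 + s • A).det ≠ 0 := fun s hs => by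
    have hlt : ‖-(s • A)‖ < 1 := by
      rw [norm_neg, norm_smul, Real.norm_of_nonneg hs.1]
      exact (mul_le_of_le_one_left (norm_nonneg A) hs.2).trans_lt hA
    have hunit : IsUnit (1 + s • A) := by simpa using isUnit_one_sub_of_norm_lt_one hlt
    exact ((hunit.map ContinuousLinearMap.toLinearMapRingHom).map LinearMap.det).ne_zero
  have hcont : ContinuousOn (fun s : ℝ => (1 + s • A).det) (Icc 0 1) :=
    (ContinuousLinearMap.continuous_det.comp (by fun_prop)).continuousOn
  by_contra! hneg
  obtain ⟨s, hs, hs0⟩ := intermediate_value_Icc' zero_le_one hcont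
    (show (0 : ℝ) ∈ _ from ⟨by simpa using hneg, by simp [ContinuousLinearMap.det]⟩)
  exact hne s hs hs0

variable [MeasurableSpace E] [BorelSpace E] (μ : Measure E) [μ.IsAddHaarMeasure]

theorem setIntegral_det_fderiv_eq_of_norm_sub_one_le {U : Set E} {g : E → E} {c : ℝ≥0}
    (hUo : IsOpen U) (hUc : Convex ℝ U) (hUb : Bornology.IsBounded U) (hUne : U.Nonempty)
    (hg : ContDiff ℝ 1 g) (hc : ∀ x ∈ U, ‖fderiv ℝ g x - 1‖₊ ≤ c) (hc1 : c < 1)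
    (hmaps : MapsTo g U U) (hfix : EqOn g id (frontier U)) :
    ∫ x in U, (fderiv ℝ g x).det ∂μ = μ.real U := by
  have hgd := hg.differentiable one_ne_zero
  have happrox := approximatesLinearOn_refl_of_norm_fderiv_sub_one_le hUc (fun x _ => hgd x) hc
  have hc' : Subsingleton E ∨
      c < ‖((ContinuousLinearEquiv.refl ℝ E).symm : E →L[ℝ] E)‖₊⁻¹ := by
    rcases subsingleton_or_nontrivial E with hE | hE
    · exact .inl hE
    · exact .inr (lt_inv_nnnorm_refl_symm hc1)
  have himage : g '' U = U := by
    have := FiniteDimensional.complete ℝ E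
    exact image_eq_of_eqOn_frontier hUo hUc.isPreconnected hUb.isCompact_closure hUne
      hg.continuous.continuousOn
      (happrox.open_image (ContinuousLinearEquiv.refl ℝ E).toNonlinearRightInverse hUo hc')
      hmaps hfix
  have hpos : ∀ x ∈ U, 0 < (fderiv ℝ g x).det := fun x hx => by
    simpa using det_one_add_pos_of_norm_lt_one ((hc x hx).trans_lt hc1)
  calc ∫ x in U, (fderiv ℝ g x).det ∂μ
      = ∫ x in U, |(fderiv ℝ g x).det| • (1 : ℝ) ∂μ :=
        setIntegral_congr_fun hUo.measurableSet fun x hx => by simp [abs_of_pos (hpos x hx)]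
    _ = ∫ _ in g '' U, (1 : ℝ) ∂μ :=
        (integral_image_eq_integral_abs_det_fderiv_smul μ hUo.measurableSet
          (fun x _ => (hgd x).hasFDerivAt.hasFDerivWithinAt) (happrox.injOn hc')
          fun _ => (1 : ℝ)).symm
    _ = μ.real U := by simp [himage]

theorem exists_forall_setIntegral_det_one_add_smul_eq {U : Set E} {r : E → E}
    (hUo : IsOpen U) (hUc : Convex ℝ U) (hUb : Bornology.IsBounded U) (hUne : U.Nonempty)
    (hr : ContDiff ℝ 1 r) (hmaps : MapsTo r U (closure U)) (hfix : EqOn r id (frontier U)) :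
    ∃ t₀ : ℝ, 0 < t₀ ∧
      ∀ t ∈ Ioo 0 t₀, ∫ x in U, (1 + t • (fderiv ℝ r x - 1)).det ∂μ = μ.real U := by
  have : Continuous (fderiv ℝ r) := hr.continuous_fderiv one_ne_zero
  obtain ⟨C, hC⟩ := hUb.isCompact_closure.exists_bound_of_continuousOn
    (f := fun x => fderiv ℝ r x - 1) (by fun_prop)
  refine ⟨1 / (|C| + 1), by positivity, fun t ⟨ht0, ht1⟩ => ?_⟩
  have ht : t * (|C| + 1) < 1 := (lt_div_iff₀ (by positivity)).1 ht1
  have hfderiv : ∀ x, fderiv ℝ (fun x => x + t • (r x - x)) x = 1 + t • (fderiv ℝ r x - 1) :=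
    fun x => ((hasFDerivAt_id x).add
      (((hr.differentiable one_ne_zero x).hasFDerivAt.sub (hasFDerivAt_id x)).const_smul t)).fderiv
  simp only [← hfderiv]
  refine setIntegral_det_fderiv_eq_of_norm_sub_one_le μ (c := (t * |C|).toNNReal)
    hUo hUc hUb hUne (by fun_prop) (fun x hx => ?_) ?_ (fun x hx => ?_) fun x hx => ?_
  · rw [hfderiv, add_sub_cancel_left, ← NNReal.coe_le_coe, coe_nnnorm, norm_smul,
      Real.norm_of_nonneg ht0.le, Real.coe_toNNReal _ (by positivity)]
    exact mul_le_mul_of_nonneg_left ((hC x (subset_closure hx)).trans (le_abs_self C)) ht0.le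
  · rw [Real.toNNReal_lt_one]
    linarith
  · have hmem := hUc.combo_interior_closure_subset_interior (a := 1 - t) (b := t)
      (by nlinarith [abs_nonneg C]) ht0.le (by ring)
      (add_mem_add (smul_mem_smul_set (by rwa [hUo.interior_eq])) (smul_mem_smul_set (hmaps hx)))
    rw [hUo.interior_eq] at hmem
    convert hmem using 1
    module
  · simp [hfix hx]

-- The determinant of `1 + t • A` is a polynomial in `t`, so its value at `t = 1` is a fixed linear
-- combination of its values at small `t`, where change of variables applies.
theorem setIntegral_det_fderiv_eq_measureReal {U : Set E} {r : E → E}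
    (hUo : IsOpen U) (hUc : Convex ℝ U) (hUb : Bornology.IsBounded U) (hUne : U.Nonempty)
    (hr : ContDiff ℝ 1 r) (hmaps : MapsTo r U (closure U)) (hfix : EqOn r id (frontier U)) :
    ∫ x in U, (fderiv ℝ r x).det ∂μ = μ.real U := by
  have : Continuous (fderiv ℝ r) := hr.continuous_fderiv one_ne_zero
  obtain ⟨t₀, ht₀, hsmall⟩ :=
    exists_forall_setIntegral_det_one_add_smul_eq μ hUo hUc hUb hUne hr hmaps hfix
  obtain ⟨s, w, hs, hw⟩ := exists_extrapolation_weights (Module.finrank ℝ E) 1 (Ioo_infinite ht₀)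
  have hdet : ∀ A : E →L[ℝ] E, (1 + A).det = ∑ t ∈ s, w t * (1 + t • A).det := fun A => by
    obtain ⟨p, hpdeg, hp⟩ := exists_polynomial_eval_eq_det_one_add_smul A
    simpa [hp] using hw p hpdeg
  have hwsum : ∑ t ∈ s, w t = 1 := by simpa [ContinuousLinearMap.det] using (hdet 0).symm
  have hint : ∀ t : ℝ, IntegrableOn (fun x => (1 + t • (fderiv ℝ r x - 1)).det) U μ := fun t =>
    ((ContinuousLinearMap.continuous_det.comp (by fun_prop)).continuousOn.integrableOn_compact
      hUb.isCompact_closure).mono_set subset_closure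
  calc ∫ x in U, (fderiv ℝ r x).det ∂μ
      = ∫ x in U, ∑ t ∈ s, w t * (1 + t • (fderiv ℝ r x - 1)).det ∂μ := by simp [← hdet]
    _ = ∑ t ∈ s, w t * ∫ x in U, (1 + t • (fderiv ℝ r x - 1)).det ∂μ := by
        rw [integral_finsetSum _ fun t _ => (hint t).const_mul _]
        simp only [integral_const_mul]
    _ = ∑ t ∈ s, w t * μ.real U := Finset.sum_congr rfl fun t ht => by rw [hsmall t (hs ht)]
    _ = μ.real U := by rw [← Finset.sum_mul, hwsum, one_mul]

theorem det_fderiv_eq_zero_of_norm_eq {F : Type*} [NormedAddCommGroup F] [InnerProductSpace ℝ F]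
    [FiniteDimensional ℝ F] {r : F → F} {R : ℝ} (hR : 0 < R) (hnorm : ∀ x, ‖r x‖ = R) {x : F}
    (hr : DifferentiableAt ℝ r x) : (fderiv ℝ r x).det = 0 := by
  by_contra hdet
  let e := LinearMap.equivOfDetNeZero (fderiv ℝ r x : F →ₗ[ℝ] F) hdet
  have hv : fderiv ℝ r x (e.symm (r x)) = r x := e.apply_symm_apply (r x)
  have hconst : (fun y => inner ℝ (r y) (r y)) = fun _ => R ^ 2 := by
    funext y
    rw [real_inner_self_eq_norm_sq, hnorm]
  have hzero := fderiv_inner_apply ℝ hr hr (e.symm (r x))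
  rw [hconst, hv, real_inner_self_eq_norm_sq, hnorm] at hzero
  have hzero' : 0 = R ^ 2 + R ^ 2 := by simpa using hzero
  nlinarith

theorem not_exists_contDiff_retraction_sphere {F : Type*} [NormedAddCommGroup F]
    [InnerProductSpace ℝ F] [FiniteDimensional ℝ F] {R : ℝ} (hR : 0 < R) :
    ¬ ∃ r : F → F, ContDiff ℝ 1 r ∧ (∀ x, ‖r x‖ = R) ∧ ∀ x, ‖x‖ = R → r x = x := by
  rintro ⟨r, hr, hnorm, hid⟩
  borelize F
  have hvol := setIntegral_det_fderiv_eq_measureReal volume isOpen_ball (convex_ball (0 : F) R)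
    isBounded_ball (nonempty_ball.2 hR) hr
    (fun x _ => by simp [closure_ball _ hR.ne', hnorm])
    fun x hx => hid x (by simpa [frontier_ball _ hR.ne'] using hx)
  simp only [det_fderiv_eq_zero_of_norm_eq hR hnorm (hr.differentiable one_ne_zero _),
    integral_zero] at hvol
  exact (ENNReal.toReal_pos (measure_ball_pos volume 0 hR).ne' measure_ball_lt_top.ne).ne hvol

end Retraction

section Brouwer

open Metric Set MeasureTheory
open scoped Topology

variable {E : Type*} [NormedAddCommGroup E] [InnerProductSpace ℝ E] [FiniteDimensional ℝ E]

theorem exists_contDiff_ne_zero_of_forall_ne {F : E → E} {R : ℝ} (hF : Continuous F)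
    (hR : ∀ x, ‖F x‖ ≤ R) (hne : ∀ x, F x ≠ x) :
    ∃ g : E → E, ContDiff ℝ 1 g ∧ (∀ x, g x ≠ 0) ∧ ∀ x, ‖x‖ = R + 2 → g x = x := by
  have hpos : ∀ x, 0 < min ‖x - F x‖ 1 := fun x =>
    lt_min (norm_pos_iff.2 (sub_ne_zero.2 (hne x).symm)) one_pos
  obtain ⟨G, hG, hGF, -⟩ := hF.exists_contDiff_approx 1 (by fun_prop) hpos
  have hGne : ∀ x, x - G x ≠ 0 := fun x hx => by
    have hlt := (hGF x).trans_le (min_le_left _ _)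
    rw [← sub_eq_zero.1 hx, dist_eq_norm] at hlt
    exact lt_irrefl _ hlt
  have hGR : ∀ x, ‖G x‖ < R + 1 := fun x => by
    have hlt := (hGF x).trans_le (min_le_right _ _)
    rw [dist_eq_norm] at hlt
    linarith [norm_le_norm_add_norm_sub' (G x) (F x), hR x]
  have hR0 : 0 ≤ R := (norm_nonneg _).trans (hR 0)
  let χ : ContDiffBump (0 : E) := ⟨R + 1, R + 2, by linarith, by linarith⟩
  refine ⟨fun x => x - χ x • G x, contDiff_id.sub (χ.contDiff.smul hG), fun x hx => ?_,
    fun x hx => ?_⟩ <;> beta_reduce at *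
  · rcases le_or_gt ‖x‖ (R + 1) with hxR | hxR
    · rw [χ.one_of_mem_closedBall (by simpa using hxR), one_smul] at hx
      exact hGne x hx
    · have hnorm : ‖χ x • G x‖ ≤ ‖G x‖ := by
        rw [norm_smul, Real.norm_of_nonneg χ.nonneg]
        exact mul_le_of_le_one_left (norm_nonneg _) χ.le_one
      rw [← sub_eq_zero.1 hx] at hnorm
      linarith [hGR x]
  · rw [χ.zero_of_le_dist (x := x) (by simp [χ, hx]), zero_smul, sub_zero]

theorem exists_isFixedPt_of_norm_le {F : E → E} {R : ℝ} (hF : Continuous F)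
    (hR : ∀ x, ‖F x‖ ≤ R) : ∃ x, Function.IsFixedPt F x := by
  by_contra! hne
  obtain ⟨g, hg, hg0, hgid⟩ := exists_contDiff_ne_zero_of_forall_ne hF hR hne
  have hR2 : 0 < R + 2 := by linarith [(norm_nonneg _).trans (hR 0)]
  refine not_exists_contDiff_retraction_sphere (F := E) hR2
    ⟨fun x => ((R + 2) / ‖g x‖) • g x, ?_, fun x => ?_, fun x hx => ?_⟩ <;> beta_reduce
  · exact (contDiff_const.div (hg.norm ℝ hg0) fun x => norm_ne_zero_iff.2 (hg0 x)).smul hg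
  · rw [norm_smul, norm_div, norm_norm, div_mul_cancel₀ _ (norm_ne_zero_iff.2 (hg0 x)),
      Real.norm_of_nonneg hR2.le]
  · rw [hgid x hx, hx, div_self hR2.ne', one_smul]

theorem exists_isFixedPt_of_mapsTo_closedBall {c : E} {r : ℝ} (hr : 0 < r) {F : E → E}
    (hF : ContinuousOn F (closedBall c r)) (hmaps : MapsTo F (closedBall c r) (closedBall c r)) :
    ∃ x ∈ closedBall c r, Function.IsFixedPt F x := by
  have := Metric.instTietzeExtensionClosedBall ℝ c hr
  obtain ⟨G, hG, hGF⟩ := ContinuousMap.exists_forall_mem_restrict_eq isClosed_closedBall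
    ⟨(closedBall c r).domRestrict F, continuousOn_iff_continuous_domRestrict.1 hF⟩
    fun x => hmaps x.2
  obtain ⟨x, hx⟩ := exists_isFixedPt_of_norm_le G.continuous
    fun x => norm_le_of_mem_closedBall (hG x)
  have hxmem : x ∈ closedBall c r := hx ▸ hG x
  have hGx : G x = F x := DFunLike.congr_fun hGF ⟨x, hxmem⟩
  exact ⟨x, hxmem, hGx.symm.trans hx⟩

theorem exists_eq_center_of_dist_le {c : E} {r : ℝ} (hr : 0 < r) {h : E → E}
    (hh : ContinuousOn h (closedBall c r)) (hdist : ∀ x ∈ closedBall c r, dist (h x) x ≤ r) :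
    ∃ x ∈ closedBall c r, h x = c := by
  obtain ⟨x, hx, hfix⟩ := exists_isFixedPt_of_mapsTo_closedBall hr (F := fun x => c + (x - h x))
    (by fun_prop) fun x hx => by
      simpa [mem_closedBall, dist_eq_norm, norm_sub_rev] using hdist x hx
  refine ⟨x, hx, ?_⟩
  rw [Function.IsFixedPt, add_comm, sub_add, sub_eq_self, sub_eq_zero] at hfix
  exact hfix

end Brouwer

section InvarianceOfDomain

open Metric Set MeasureTheory
open scoped Topology

variable {E : Type*} [NormedAddCommGroup E] [NormedSpace ℝ E]

/-- Pushes the punctured ball of radius `δ` around `c` radially onto its boundary sphere and fixes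
every point outside that ball. -/
noncomputable def radialPush (c : E) (δ : ℝ) (y : E) : E :=
  c + max (δ / ‖y - c‖) 1 • (y - c)

theorem continuousOn_radialPush (c : E) (δ : ℝ) : ContinuousOn (radialPush c δ) {c}ᶜ := by
  have hq : ContinuousOn (fun y : E => δ / ‖y - c‖) {c}ᶜ :=
    continuousOn_const.div (by fun_prop) fun y hy => norm_ne_zero_iff.2 (sub_ne_zero.2 hy)
  exact continuousOn_const.add ((hq.sup continuousOn_const).smul (by fun_prop))

theorem radialPush_of_le_dist {c y : E} {δ : ℝ} (hy : δ ≤ dist y c) : radialPush c δ y = y := by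
  rw [dist_eq_norm] at hy
  rw [radialPush, max_eq_right (div_le_one_of_le₀ hy (norm_nonneg _)), one_smul, add_sub_cancel]

theorem radialPush_mem_sphere {c y : E} {δ : ℝ} (hyc : y ≠ c) (hy : dist y c ≤ δ) :
    radialPush c δ y ∈ sphere c δ := by
  have hpos : 0 < ‖y - c‖ := norm_pos_iff.2 (sub_ne_zero.2 hyc)
  rw [dist_eq_norm] at hy
  rw [radialPush, max_eq_left ((one_le_div hpos).2 hy), mem_sphere_iff_norm, add_sub_cancel_left,
    norm_smul, norm_div, norm_norm, div_mul_cancel₀ _ hpos.ne',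
    Real.norm_of_nonneg (hpos.le.trans hy)]

theorem dist_comp_radialPush_lt {G P : E → E} {a b c y : E} {δ ρ : ℝ}
    (hPG : ∀ y, dist (P y) (G y) < ρ) (hG : ∀ y, dist y b < 2 * δ → dist (G y) a < ρ)
    (hc : dist c b < δ) (hy : y ≠ c) : dist (P (radialPush c δ y)) (G y) < 3 * ρ := by
  rcases le_or_gt δ (dist y c) with hyc | hyc
  · rw [radialPush_of_le_dist hyc]
    linarith [hPG y, dist_nonneg (x := P y) (y := G y)]
  · set z := radialPush c δ y
    have hz : dist z c = δ := radialPush_mem_sphere hy hyc.le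
    have hGz : dist (G z) a < ρ := hG z (by linarith [dist_triangle z c b])
    have hGy : dist a (G y) < ρ := dist_comm a _ ▸ hG y (by linarith [dist_triangle y c b])
    linarith [hPG z, dist_triangle (P z) (G z) (G y), dist_triangle (G z) a (G y)]

variable [FiniteDimensional ℝ E]

-- A smooth approximation maps the null set `T` to a null set, so a small translation moves that
-- image off `a`.
theorem exists_continuous_approx_forall_ne [MeasurableSpace E] [BorelSpace E] (μ : Measure E)
    [μ.IsAddHaarMeasure] {G : E → E} (hG : Continuous G) {S T : Set E} {a : E} (hS : IsCompact S)
    (hGS : ∀ y ∈ S, G y ≠ a) (hT : μ T = 0) {ε : ℝ} (hε : 0 < ε) :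
    ∃ P : E → E, Continuous P ∧ (∀ y, dist (P y) (G y) < ε) ∧ ∀ y ∈ S ∪ T, P y ≠ a := by
  obtain ⟨η, hη, hηS⟩ : ∃ η > 0, ball a η ⊆ (G '' S)ᶜ :=
    Metric.isOpen_iff.1 (hS.image hG).isClosed.isOpen_compl a fun ⟨y, hy, hya⟩ => hGS y hy hya
  have hκ : 0 < min η ε / 2 := half_pos (lt_min hη hε)
  obtain ⟨Q, hQ, hQG, -⟩ := hG.exists_contDiff_approx 1 (ε := fun _ => min η ε / 2)
    continuous_const fun _ => hκ
  obtain ⟨v, hv, hvT⟩ : ∃ v ∈ ball a (min η ε / 2), v ∉ Q '' T := by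
    by_contra! hsub
    have hnull : μ (Q '' T) = 0 := addHaar_image_eq_zero_of_differentiableOn_of_addHaar_eq_zero μ
      (hQ.differentiable one_ne_zero).differentiableOn hT
    exact (measure_ball_pos μ a hκ).ne' (measure_mono_null hsub hnull)
  have hdist : ∀ y, dist (Q y - v + a) (G y) < min η ε := fun y => by
    have hQGy := hQG y
    rw [mem_ball', dist_eq_norm] at hv
    rw [dist_eq_norm] at hQGy ⊢
    calc ‖Q y - v + a - G y‖ = ‖(Q y - G y) + (a - v)‖ := by congr 1; abel
      _ ≤ ‖Q y - G y‖ + ‖a - v‖ := norm_add_le _ _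
      _ < min η ε := by linarith
  refine ⟨fun y => Q y - v + a, by fun_prop, fun y => (hdist y).trans_le (min_le_right _ _), ?_⟩
  rintro y (hyS | hyT) hya
  · refine hηS ?_ (mem_image_of_mem G hyS)
    rw [mem_ball', ← hya]
    exact (hdist y).trans_le (min_le_left _ _)
  · exact hvT ⟨y, hyT, by simpa [sub_eq_zero] using hya⟩

theorem exists_continuous_leftInvOn {X : Type*} [TopologicalSpace X] [T4Space X] {K : Set E}
    {f : E → X} (hK : IsCompact K) (hf : ContinuousOn f K) (hinj : InjOn f K) :
    ∃ G : X → E, Continuous G ∧ LeftInvOn G f K := by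
  have := isCompact_iff_compactSpace.1 hK
  have hemb : Topology.IsClosedEmbedding (K.domRestrict f) :=
    (continuousOn_iff_continuous_domRestrict.1 hf).isClosedEmbedding (injOn_iff_injective.1 hinj)
  obtain ⟨G, hG⟩ := ContinuousMap.exists_extension' hemb
    (⟨Subtype.val, continuous_subtype_val⟩ : C(K, E))
  exact ⟨G, G.continuous, fun x hx => congrFun hG ⟨x, hx⟩⟩

-- Let `G` be a continuous extension of the inverse of `f`. If `f a` were not interior to the image,
-- some `c` near `f a` would be missed; pushing the image off a ball around `c` before applying a
-- perturbation `P` of `G` gives a map close to the identity that omits `a`, against Brouwer.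
theorem image_closedBall_mem_nhds {F : Type*} [NormedAddCommGroup F] [InnerProductSpace ℝ F]
    [FiniteDimensional ℝ F] {f : F → F} {a : F} {r : ℝ} (hr : 0 < r)
    (hf : ContinuousOn f (closedBall a r)) (hinj : InjOn f (closedBall a r)) :
    f '' closedBall a r ∈ 𝓝 (f a) := by
  borelize F
  have ha : a ∈ closedBall a r := mem_closedBall_self hr.le
  have hK : IsCompact (closedBall a r) := isCompact_closedBall a r
  obtain ⟨G, hG, hGf⟩ := exists_continuous_leftInvOn hK hf hinj
  by_contra hnhds
  obtain ⟨δ, hδ, hGδ⟩ : ∃ δ > 0, ∀ y, dist y (f a) < 2 * δ → dist (G y) a < r / 3 := by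
    obtain ⟨δ, hδ, h⟩ := Metric.continuousAt_iff.1 hG.continuousAt (r / 3) (by positivity)
    refine ⟨δ / 2, half_pos hδ, fun y hy => ?_⟩
    simpa [hGf ha] using h (hy.trans_eq (by ring))
  obtain ⟨c, hcδ, hc⟩ : ∃ c, dist c (f a) < δ ∧ c ∉ f '' closedBall a r := by
    by_contra! hsub
    exact hnhds (Filter.mem_of_superset (ball_mem_nhds _ hδ) hsub)
  obtain ⟨P, hP, hPG, hPa⟩ := exists_continuous_approx_forall_ne volume hG
    (S := f '' closedBall a r \ ball c δ) (T := sphere c δ) (a := a)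
    ((hK.image_of_continuousOn hf).diff isOpen_ball)
    (by
      rintro _ ⟨⟨x, hx, rfl⟩, hxc⟩ hGx
      rw [hGf hx] at hGx
      exact hxc (by rwa [hGx, mem_ball']))
    (Measure.addHaar_sphere_of_ne_zero _ _ hδ.ne') (show 0 < r / 3 by positivity)
  have hne : ∀ x ∈ closedBall a r, f x ≠ c := fun x hx h => hc ⟨x, hx, h⟩
  obtain ⟨x, hx, hxa⟩ := exists_eq_center_of_dist_le hr
    (hP.comp_continuousOn ((continuousOn_radialPush c δ).comp hf hne)) fun x hx => by
      have hclose := dist_comp_radialPush_lt hPG hGδ hcδ (hne x hx)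
      rw [hGf hx, mul_div_cancel₀ r three_ne_zero] at hclose
      exact hclose.le
  rcases le_or_gt δ (dist (f x) c) with hxc | hxc
  · rw [Function.comp_apply, Function.comp_apply, radialPush_of_le_dist hxc] at hxa
    exact hPa _ (.inl ⟨mem_image_of_mem f hx, not_lt.2 hxc⟩) hxa
  · exact hPa _ (.inr (radialPush_mem_sphere (hne x hx) hxc.le)) hxa

theorem image_mem_nhds_of_injOn {X : Type*} [NormedAddCommGroup X] [NormedSpace ℝ X]
    [FiniteDimensional ℝ X] (hdim : Module.finrank ℝ X = Module.finrank ℝ E) {s : Set X}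
    {f : X → E} {a : X} (hs : s ∈ 𝓝 a) (hf : ContinuousOn f s) (hinj : InjOn f s) :
    f '' s ∈ 𝓝 (f a) := by
  let Y := EuclideanSpace ℝ (Fin (Module.finrank ℝ X))
  let φ : Y ≃L[ℝ] X := ContinuousLinearEquiv.ofFinrankEq (by simp [Y])
  let ψ : Y ≃L[ℝ] E := ContinuousLinearEquiv.ofFinrankEq (by simp [Y, hdim])
  obtain ⟨r, hr, hrs⟩ : ∃ r > 0, closedBall (φ.symm a) r ⊆ φ ⁻¹' s :=
    nhds_basis_closedBall.mem_iff.1 (φ.continuous.continuousAt (by simpa using hs))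
  have himage := image_closedBall_mem_nhds (f := ψ.symm ∘ f ∘ φ) hr
    (ψ.symm.continuous.comp_continuousOn (hf.comp φ.continuous.continuousOn hrs))
    (ψ.symm.injective.comp_injOn (hinj.comp φ.injective.injOn hrs))
  have hψ := ψ.toHomeomorph.isOpenMap.image_mem_nhds himage
  simp only [ContinuousLinearEquiv.coe_toHomeomorph, Function.comp_apply,
    ContinuousLinearEquiv.apply_symm_apply] at hψ
  refine Filter.mem_of_superset hψ ?_
  rintro _ ⟨_, ⟨y, hy, rfl⟩, rfl⟩
  exact ⟨φ y, hrs hy, by simp⟩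

end InvarianceOfDomain

section Nonbranching

open Set Topology

/-- Every `(d - 1)`-simplex lies in at most two `d`-faces of `K`: the number two
bounds the size of every finite set of such `d`-faces, which avoids the junk cardinality of an
infinite set. -/
def IsNonbranching (K : Set (Finset V)) (d : ℕ) : Prop :=
  ∀ σ : Finset V, σ.card = d → ∀ S : Finset (Finset V),
    (∀ F ∈ S, F ∈ K ∧ F.card = d + 1 ∧ σ ⊆ F) → S.card ≤ 2

variable {W : Type*} [NormedAddCommGroup W] [NormedSpace ℝ W]

theorem eq_of_lineMap_eq_lineMap {s : AffineSubspace ℝ W} {x y p : W} (hx : x ∈ s) (hy : y ∈ s)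
    (hp : p ∉ s) {t t' : ℝ} (h : AffineMap.lineMap x p t = AffineMap.lineMap y p t') : t = t' := by
  by_contra htt
  have htt : t - t' ≠ 0 := sub_ne_zero.2 htt
  have hp_eq : p = AffineMap.lineMap y x ((t - 1) / (t - t')) := by
    simp only [AffineMap.lineMap_apply_module] at h ⊢
    have hcoeff : 1 - (t - 1) / (t - t') = (1 - t') / (t - t') := by field_simp; ring
    rw [hcoeff, ← smul_right_inj htt, smul_add, smul_smul, smul_smul, mul_div_cancel₀ _ htt,
      mul_div_cancel₀ _ htt]
    rw [← sub_eq_zero] at h ⊢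
    rw [← h]
    module
  exact hp (hp_eq ▸ AffineMap.lineMap_mem _ hy hx)

theorem eq_and_eq_of_lineMap_eq_lineMap {s : AffineSubspace ℝ W} {x y p : W} (hx : x ∈ s)
    (hy : y ∈ s) (hp : p ∉ s) {t t' : ℝ} (ht : t < 1)
    (h : AffineMap.lineMap x p t = AffineMap.lineMap y p t') : x = y ∧ t = t' := by
  obtain rfl := eq_of_lineMap_eq_lineMap hx hy hp h
  simp only [AffineMap.lineMap_apply_module, add_left_inj] at h
  exact ⟨smul_right_injective W (sub_pos.2 ht).ne' h, rfl⟩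

theorem notMem_affineSpan_of_insert_mem_faces (B : Geometry.SimplicialComplex ℝ W) {σ : Finset W}
    {p : W} (hp : p ∉ σ) (hpσ : insert p σ ∈ B.faces) : p ∉ affineSpan ℝ (σ : Set W) := by
  have h := (B.indep hpσ).notMem_affineSpan_sdiff ⟨p, Finset.mem_insert_self p σ⟩ univ
  convert h using 2
  congr 1
  ext x
  simp only [Finset.mem_coe, mem_image, mem_sdiff, mem_univ, true_and, mem_singleton_iff,
    Subtype.exists, Subtype.mk.injEq, Finset.mem_insert]
  grind

theorem lineMap_mem_convexHull_insert {σ : Finset W} {x p : W}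
    (hx : x ∈ convexHull ℝ (σ : Set W)) {t : ℝ} (ht : t ∈ Icc (0 : ℝ) 1) :
    AffineMap.lineMap x p t ∈ convexHull ℝ ((insert p σ : Finset W) : Set W) :=
  (convex_convexHull ℝ _).lineMap_mem (convexHull_mono (by simp) hx)
    (subset_convexHull ℝ _ (by simp)) ht

theorem lineMap_ne_lineMap_of_insert_mem_faces (B : Geometry.SimplicialComplex ℝ W) {σ : Finset W}
    {p q : W} (hp : p ∉ σ) (hpq : p ≠ q) (hpσ : insert p σ ∈ B.faces) (hqσ : insert q σ ∈ B.faces)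
    {x y : W} (hx : x ∈ convexHull ℝ (σ : Set W)) (hy : y ∈ convexHull ℝ (σ : Set W))
    {t t' : ℝ} (ht : t ∈ Ioc (0 : ℝ) 1) (ht' : t' ∈ Icc (0 : ℝ) 1) :
    AffineMap.lineMap x p t ≠ AffineMap.lineMap y q t' := by
  intro h
  have hmem := B.inter_subset_convexHull hpσ hqσ
    ⟨lineMap_mem_convexHull_insert hx ⟨ht.1.le, ht.2⟩, h ▸ lineMap_mem_convexHull_insert hy ht'⟩
  have hσ : ((insert p σ : Finset W) : Set W) ∩ (insert q σ : Finset W) ⊆ σ := by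
    rintro v ⟨hv, hv'⟩
    simp only [Finset.coe_insert, mem_insert_iff, Finset.mem_coe] at hv hv' ⊢
    grind
  have hspan := convexHull_subset_affineSpan _ (convexHull_mono hσ hmem)
  refine ht.1.ne' (eq_of_lineMap_eq_lineMap (convexHull_subset_affineSpan _ hx) hspan
    (notMem_affineSpan_of_insert_mem_faces B hp hpσ) (t' := 0) ?_)
  rw [AffineMap.lineMap_apply_zero]

theorem exists_eventually_add_mem_of_convex [FiniteDimensional ℝ W] {s : Set W}
    (hs : Convex ℝ s) (hne : s.Nonempty) :
    ∃ b ∈ s, ∀ᶠ v : vectorSpan ℝ s in 𝓝 0, b + v ∈ s := by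
  obtain ⟨b, hb⟩ := hne.intrinsicInterior hs
  obtain ⟨y, hy, rfl⟩ := mem_intrinsicInterior.1 hb
  refine ⟨y, intrinsicInterior_subset hb, ?_⟩
  let translate : vectorSpan ℝ s → affineSpan ℝ s := fun v =>
    ⟨y + v, by
      rw [add_comm]
      exact AffineSubspace.vadd_mem_of_mem_direction ((direction_affineSpan ℝ s).symm ▸ v.2) y.2⟩
  have hcont : Continuous translate := by fun_prop
  have h0 : translate 0 = y := Subtype.ext (by simp [translate])
  exact hcont.continuousAt (h0 ▸ mem_interior_iff_mem_nhds.1 hy)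

theorem finrank_vectorSpan_convexHull_add_one {σ : Finset W}
    (hσ : AffineIndependent ℝ ((↑) : σ → W)) (hne : σ.Nonempty) :
    Module.finrank ℝ (vectorSpan ℝ (convexHull ℝ (σ : Set W))) + 1 = σ.card := by
  have := hne.to_subtype
  rw [← direction_affineSpan, affineSpan_convexHull, direction_affineSpan]
  have hrange : range ((↑) : σ → W) = σ := Subtype.range_coe
  rw [← hrange, hσ.finrank_vectorSpan_add_one, Fintype.card_coe]

/-- The two pages with apexes `p` and `q` attached to the spine `b + L`, as one map: for `t ≥ 0`
the point `(v, t)` is carried from `b + v` towards `p`, for `t ≤ 0` towards `q`. -/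
def openBook {L : Submodule ℝ W} (b p q : W) (z : L × ℝ) : W :=
  b + z.1 + max z.2 0 • (p - (b + z.1)) + max (-z.2) 0 • (q - (b + z.1))

theorem continuous_openBook {L : Submodule ℝ W} (b p q : W) :
    Continuous (openBook (L := L) b p q) := by
  unfold openBook
  fun_prop

theorem openBook_of_nonneg {L : Submodule ℝ W} (b p q : W) {z : L × ℝ} (hz : 0 ≤ z.2) :
    openBook b p q z = AffineMap.lineMap (b + z.1) p z.2 := by
  simp [openBook, hz, AffineMap.lineMap_apply, add_comm]

theorem openBook_of_nonpos {L : Submodule ℝ W} (b p q : W) {z : L × ℝ} (hz : z.2 ≤ 0) :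
    openBook b p q z = AffineMap.lineMap (b + z.1) q (-z.2) := by
  simp [openBook, hz, AffineMap.lineMap_apply, add_comm]

section OpenBook

variable {B : Geometry.SimplicialComplex ℝ W} {σ : Finset W} {L : Submodule ℝ W} {b p q : W}

theorem mapsTo_openBook (hpσ : insert p σ ∈ B.faces) (hqσ : insert q σ ∈ B.faces) :
    MapsTo (openBook b p q) {z : L × ℝ | b + z.1 ∈ convexHull ℝ (σ : Set W) ∧ |z.2| < 1}
      B.space := by
  rintro z ⟨hz, hz'⟩
  rw [abs_lt] at hz'
  rcases le_total 0 z.2 with h | h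
  · rw [openBook_of_nonneg _ _ _ h]
    exact B.convexHull_subset_space hpσ (lineMap_mem_convexHull_insert hz ⟨h, hz'.2.le⟩)
  · rw [openBook_of_nonpos _ _ _ h]
    exact B.convexHull_subset_space hqσ
      (lineMap_mem_convexHull_insert hz ⟨neg_nonneg.2 h, by linarith⟩)

theorem injOn_openBook (hp : p ∉ σ) (hq : q ∉ σ) (hpq : p ≠ q) (hpσ : insert p σ ∈ B.faces)
    (hqσ : insert q σ ∈ B.faces) :
    InjOn (openBook b p q)
      {z : L × ℝ | b + z.1 ∈ convexHull ℝ (σ : Set W) ∧ |z.2| < 1} := by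
  have hspan {x : W} (hx : x ∈ convexHull ℝ (σ : Set W)) : x ∈ affineSpan ℝ (σ : Set W) :=
    convexHull_subset_affineSpan _ hx
  rintro ⟨v, t⟩ ⟨hv, ht⟩ ⟨v', t'⟩ ⟨hv', ht'⟩ h
  dsimp only at hv hv' ht ht'
  rw [abs_lt] at ht ht'
  rcases le_or_gt 0 t with h0 | h0 <;> rcases le_or_gt 0 t' with h0' | h0'
  · rw [openBook_of_nonneg _ _ _ h0, openBook_of_nonneg _ _ _ h0'] at h
    obtain ⟨hvv, htt⟩ := eq_and_eq_of_lineMap_eq_lineMap (hspan hv) (hspan hv')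
      (notMem_affineSpan_of_insert_mem_faces B hp hpσ) ht.2 h
    exact Prod.ext (Subtype.ext (add_left_cancel hvv)) htt
  · rw [openBook_of_nonneg _ _ _ h0, openBook_of_nonpos _ _ _ h0'.le] at h
    exact absurd h.symm (lineMap_ne_lineMap_of_insert_mem_faces B hq hpq.symm hqσ hpσ hv' hv
      ⟨neg_pos.2 h0', by linarith⟩ ⟨h0, ht.2.le⟩)
  · rw [openBook_of_nonpos _ _ _ h0.le, openBook_of_nonneg _ _ _ h0'] at h
    exact absurd h (lineMap_ne_lineMap_of_insert_mem_faces B hq hpq.symm hqσ hpσ hv hv'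
      ⟨neg_pos.2 h0, by linarith⟩ ⟨h0', ht'.2.le⟩)
  · rw [openBook_of_nonpos _ _ _ h0.le, openBook_of_nonpos _ _ _ h0'.le] at h
    obtain ⟨hvv, htt⟩ := eq_and_eq_of_lineMap_eq_lineMap (hspan hv) (hspan hv')
      (notMem_affineSpan_of_insert_mem_faces B hq hqσ) (by linarith) h
    exact Prod.ext (Subtype.ext (add_left_cancel hvv)) (neg_injective htt)

theorem lineMap_ne_openBook {r : W} (hr : r ∉ σ) (hrp : r ≠ p) (hrq : r ≠ q)
    (hpσ : insert p σ ∈ B.faces) (hqσ : insert q σ ∈ B.faces) (hrσ : insert r σ ∈ B.faces)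
    {x : W} (hx : x ∈ convexHull ℝ (σ : Set W)) {s : ℝ} (hs : s ∈ Ioc (0 : ℝ) 1) {z : L × ℝ}
    (hz : b + z.1 ∈ convexHull ℝ (σ : Set W) ∧ |z.2| < 1) :
    AffineMap.lineMap x r s ≠ openBook b p q z := by
  have hz' := abs_lt.1 hz.2
  rcases le_total 0 z.2 with h | h
  · rw [openBook_of_nonneg _ _ _ h]
    exact lineMap_ne_lineMap_of_insert_mem_faces B hr hrp hrσ hpσ hx hz.1 hs ⟨h, hz'.2.le⟩
  · rw [openBook_of_nonpos _ _ _ h]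
    exact lineMap_ne_lineMap_of_insert_mem_faces B hr hrq hrσ hqσ hx hz.1 hs
      ⟨neg_nonneg.2 h, by linarith⟩

end OpenBook

variable [FiniteDimensional ℝ W] {E : Type*} [NormedAddCommGroup E] [NormedSpace ℝ E]
  [FiniteDimensional ℝ E] {B : Geometry.SimplicialComplex ℝ W} {f : W → E}

-- By invariance of domain the first two pages already fill a neighbourhood of a point `b` inside
-- `σ`, which leaves no room for the third page near `b`.
theorem not_three_insert_mem_faces (hf : ContinuousOn f B.space) (hinj : InjOn f B.space)
    {σ : Finset W} (hσ : σ.Nonempty) (hcard : σ.card = Module.finrank ℝ E) {p q r : W}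
    (hp : p ∉ σ) (hq : q ∉ σ) (hr : r ∉ σ) (hpq : p ≠ q) (hrp : r ≠ p) (hrq : r ≠ q)
    (hpσ : insert p σ ∈ B.faces) (hqσ : insert q σ ∈ B.faces) : insert r σ ∉ B.faces := by
  intro hrσ
  obtain ⟨b, hb, hbL⟩ := exists_eventually_add_mem_of_convex (convex_convexHull ℝ (σ : Set W))
    hσ.to_set.convexHull
  let L := vectorSpan ℝ (convexHull ℝ (σ : Set W))
  let D : Set (L × ℝ) := {z | b + z.1 ∈ convexHull ℝ (σ : Set W) ∧ |z.2| < 1}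
  have hD : D ∈ 𝓝 0 := by
    have hspine : ∀ᶠ z : L × ℝ in 𝓝 0, b + z.1 ∈ convexHull ℝ (σ : Set W) :=
      (continuous_fst.tendsto' (0 : L × ℝ) 0 rfl).eventually hbL
    have hheight : ∀ᶠ z : L × ℝ in 𝓝 0, |z.2| < 1 :=
      (continuous_snd.abs.tendsto' (0 : L × ℝ) 0 (by simp)).eventually_lt_const one_pos
    exact hspine.and hheight
  have hdim : Module.finrank ℝ (L × ℝ) = Module.finrank ℝ E := by
    rw [Module.finrank_prod, Module.finrank_self, ← hcard]
    exact finrank_vectorSpan_convexHull_add_one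
      (B.indep (B.down_closed hpσ (Finset.subset_insert p σ) hσ)) hσ
  have hbook := mapsTo_openBook (L := L) (b := b) hpσ hqσ
  have hnhds : (f ∘ openBook b p q) '' D ∈ 𝓝 (f b) := by
    simpa [openBook] using image_mem_nhds_of_injOn hdim hD
      (hf.comp (continuous_openBook b p q).continuousOn hbook)
      (hinj.comp (injOn_openBook hp hq hpq hpσ hqσ) hbook)
  have hpage : MapsTo (AffineMap.lineMap b r : ℝ → W) (Icc 0 1) B.space := fun s hs =>
    B.convexHull_subset_space hrσ (lineMap_mem_convexHull_insert hb hs)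
  have hcurve : ContinuousWithinAt (f ∘ AffineMap.lineMap b r) (Ioc (0 : ℝ) 1) 0 :=
    ((hf.comp AffineMap.lineMap_continuous.continuousOn hpage) 0 (by simp)).mono Ioc_subset_Icc_self
  have : (𝓝[Ioc (0 : ℝ) 1] 0).NeBot := by
    rw [nhdsWithin_Ioc_eq_nhdsGT one_pos]
    infer_instance
  obtain ⟨s, ⟨z, hz, hzs⟩, hs⟩ := ((hcurve.eventually
    (by rwa [Function.comp_apply, AffineMap.lineMap_apply_zero])).and self_mem_nhdsWithin).exists
  exact lineMap_ne_openBook hr hrp hrq hpσ hqσ hrσ hb hs hz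
    (hinj (hbook hz) (hpage ⟨hs.1.le, hs.2⟩) hzs).symm

theorem isNonbranching_of_injOn (hE : 0 < Module.finrank ℝ E) (hf : ContinuousOn f B.space)
    (hinj : InjOn f B.space) : IsNonbranching B.faces (Module.finrank ℝ E) := by
  intro σ hσ S hS
  by_contra! hcard
  obtain ⟨F, G, H, hF, hG, hH, hFG, hFH, hGH⟩ := Finset.two_lt_card_iff.1 hcard
  have exists_apex {F : Finset W} (hF : F ∈ S) : ∃ p ∉ σ, insert p σ = F :=
    Finset.exists_eq_insert_iff.2 ⟨(hS F hF).2.2, by rw [hσ, (hS F hF).2.1]⟩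
  obtain ⟨p, hp, rfl⟩ := exists_apex hF
  obtain ⟨q, hq, rfl⟩ := exists_apex hG
  obtain ⟨r, hr, rfl⟩ := exists_apex hH
  exact not_three_insert_mem_faces hf hinj (Finset.card_pos.1 (hσ ▸ hE)) hσ hp hq hr
    (by rintro rfl; exact hFG rfl) (by rintro rfl; exact hFH rfl) (by rintro rfl; exact hGH rfl)
    (hS _ hF).1 (hS _ hG).1 (hS _ hH).1

theorem isNonbranching_of_isBallSet {N d : ℕ} (hd : 0 < d)
    {B : Geometry.SimplicialComplex ℝ (EuclideanSpace ℝ (Fin N))} (hB : IsBallSet d B.space) :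
    IsNonbranching B.faces d := by
  obtain ⟨φ⟩ := hB
  let f : EuclideanSpace ℝ (Fin N) → EuclideanSpace ℝ (Fin d) :=
    Function.extend (↑) (fun x => φ x) 0
  have hfφ : B.space.domRestrict f = fun x => (φ x : EuclideanSpace ℝ (Fin d)) :=
    Function.extend_comp Subtype.val_injective _ _
  have hf : ContinuousOn f B.space := by
    rw [continuousOn_iff_continuous_domRestrict, hfφ]
    exact continuous_subtype_val.comp φ.continuous
  have hinj : InjOn f B.space := by
    rw [injOn_iff_injective, hfφ]
    exact Subtype.val_injective.comp φ.injective
  simpa using isNonbranching_of_injOn (by simpa using hd) hf hinj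

end Nonbranching

section EdgeLists

variable [DecidableEq V]

/-- The vertices of a graph given by the list of its edges. -/
def vertices (L : List (Finset V)) : Finset V :=
  L.toFinset.biUnion id

/-- Every edge in the list, except the last, shares a vertex with some later edge: the
one-dimensional shadow of a shelling down. -/
def EachMeetsLater : List (Finset V) → Prop
  | [] => True
  | p :: L => (L ≠ [] → ¬Disjoint p (vertices L)) ∧ EachMeetsLater L

theorem mem_vertices {L : List (Finset V)} {x : V} : x ∈ vertices L ↔ ∃ p ∈ L, x ∈ p := by
  simp [vertices]

theorem vertices_cons (p : Finset V) (L : List (Finset V)) :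
    vertices (p :: L) = p ∪ vertices L := by
  simp [vertices]

theorem card_vertices_cons_le {p : Finset V} {L : List (Finset V)} (hp : p.card = 2)
    (h : ¬Disjoint p (vertices L)) : (vertices (p :: L)).card ≤ (vertices L).card + 1 := by
  have hinter : 0 < (p ∩ vertices L).card :=
    Finset.card_pos.2 (Finset.not_disjoint_iff_nonempty_inter.1 h)
  have := Finset.card_union_add_card_inter p (vertices L)
  rw [vertices_cons]
  lia

theorem card_vertices_le_length_add_one {L : List (Finset V)} (hL : ∀ p ∈ L, p.card = 2)
    (hmeet : EachMeetsLater L) : (vertices L).card ≤ L.length + 1 := by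
  induction L with
  | nil => simp [vertices]
  | cons p L ih =>
    have hp := hL p List.mem_cons_self
    rcases eq_or_ne L [] with rfl | hne
    · simp [vertices, hp]
    · have hstep := card_vertices_cons_le hp (hmeet.1 hne)
      have := ih (fun q hq => hL q (List.mem_cons_of_mem p hq)) hmeet.2
      rw [List.length_cons]
      lia

theorem card_vertices_le_length {L R : List (Finset V)} {p : Finset V}
    (hL : ∀ q ∈ L, q.card = 2) (hmeet : EachMeetsLater L) (hR : p :: R <:+ L)
    (hp : p ⊆ vertices R) : (vertices L).card ≤ L.length := by
  induction L with
  | nil => simp at hR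
  | cons q L ih =>
    have hL' : ∀ q ∈ L, q.card = 2 := fun r hr => hL r (List.mem_cons_of_mem q hr)
    rcases List.suffix_cons_iff.1 hR with heq | hsuff
    · obtain ⟨rfl, rfl⟩ := List.cons.inj heq
      rw [vertices_cons, Finset.union_eq_right.2 hp]
      exact card_vertices_le_length_add_one hL' hmeet.2
    · have hne : L ≠ [] := by rintro rfl; simp at hsuff
      have hstep := card_vertices_cons_le (hL q List.mem_cons_self) (hmeet.1 hne)
      exact hstep.trans (Nat.succ_le_succ (ih hL' hmeet.2 hsuff))

theorem card_lt_card_biUnion_of_degree_le_two {S : Finset (Finset V)} (hS : ∀ p ∈ S, p.card = 2)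
    (hdeg : ∀ x, {p ∈ S | x ∈ p}.card ≤ 2) {x : V} (hx : {p ∈ S | x ∈ p}.card = 1) :
    S.card < (S.biUnion id).card := by
  have hdouble := Finset.sum_card_bipartiteAbove_eq_sum_card_bipartiteBelow
    (s := S) (t := S.biUnion id) (fun p v => v ∈ p)
  have habove : ∀ p ∈ S, (Finset.bipartiteAbove (fun p v => v ∈ p) (S.biUnion id) p).card = 2 := by
    intro p hp
    rw [Finset.bipartiteAbove, Finset.filter_mem_eq_inter,
      Finset.inter_eq_right.2 (by exact Finset.subset_biUnion_of_mem id hp), hS p hp]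
  have hxS : x ∈ S.biUnion id := by
    obtain ⟨p, hp⟩ := Finset.card_pos.1 (hx.symm ▸ one_pos)
    obtain ⟨hpS, hxp⟩ := Finset.mem_filter.1 hp
    exact Finset.mem_biUnion.2 ⟨p, hpS, hxp⟩
  have hbelow := Finset.sum_lt_sum (fun v (_ : v ∈ S.biUnion id) => hdeg v)
    ⟨x, hxS, hx.trans_lt one_lt_two⟩
  rw [Finset.sum_congr rfl habove, Finset.sum_const, smul_eq_mul] at hdouble
  rw [Finset.sum_const, smul_eq_mul] at hbelow
  exact lt_of_mul_lt_mul_right (hdouble.trans_lt hbelow) zero_le_two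

theorem not_subset_vertices_of_degree_le_two {L R : List (Finset V)} {p : Finset V}
    (hnodup : L.Nodup) (hL : ∀ q ∈ L, q.card = 2) (hmeet : EachMeetsLater L)
    (hdeg : ∀ x, {q ∈ L.toFinset | x ∈ q}.card ≤ 2) {x : V}
    (hx : {q ∈ L.toFinset | x ∈ q}.card = 1) (hR : p :: R <:+ L) : ¬p ⊆ vertices R := by
  intro hp
  have hlt := card_lt_card_biUnion_of_degree_le_two (S := L.toFinset) (by simpa using hL) hdeg hx
  rw [List.toFinset_card_of_nodup hnodup] at hlt
  exact hlt.not_ge (card_vertices_le_length hL hmeet hR hp)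

end EdgeLists

section Link

variable [DecidableEq V] {e : Finset V}

/-- The link of `e` in the complex whose facets are listed by `l`, as the list of its facets in
the induced order. -/
def link (e : Finset V) (l : List (Finset V)) : List (Finset V) :=
  (l.filter (e ⊆ ·)).map (· \ e)

theorem mem_link {l : List (Finset V)} {p : Finset V} :
    p ∈ link e l ↔ ∃ F ∈ l, e ⊆ F ∧ F \ e = p := by
  simp [link, and_assoc]

theorem link_cons_of_subset {F : Finset V} {l : List (Finset V)} (h : e ⊆ F) :
    link e (F :: l) = F \ e :: link e l := by
  simp [link, h]

theorem link_cons_of_not_subset {F : Finset V} {l : List (Finset V)} (h : ¬e ⊆ F) :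
    link e (F :: l) = link e l := by
  simp [link, h]

theorem cons_link_suffix_link {F : Finset V} {l rest : List (Finset V)} (h : F :: rest <:+ l)
    (he : e ⊆ F) : F \ e :: link e rest <:+ link e l := by
  rw [← link_cons_of_subset he]
  exact (h.filter _).map _

theorem injOn_sdiff_right (e : Finset V) : Set.InjOn (· \ e) {F | e ⊆ F} := by
  intro F hF G hG h
  dsimp only at h
  rw [← Finset.sdiff_union_of_subset hF, h, Finset.sdiff_union_of_subset hG]

theorem nodup_link {l : List (Finset V)} (hl : l.Nodup) : (link e l).Nodup :=
  (hl.filter _).map_on fun F hF G hG h => injOn_sdiff_right e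
    (by simpa using (List.mem_filter.1 hF).2) (by simpa using (List.mem_filter.1 hG).2) h

theorem eachMeetsLater_link {l : List (Finset V)}
    (h : ∀ F rest, F :: rest <:+ l → e ⊆ F → (∃ G ∈ rest, e ⊆ G) →
      ∃ x ∈ F \ e, ∃ G ∈ rest, e ⊆ G ∧ x ∈ G) : EachMeetsLater (link e l) := by
  induction l with
  | nil => trivial
  | cons F l ih =>
    have hlink := ih fun G rest hG => h G rest (hG.trans (List.suffix_cons F l))
    by_cases he : e ⊆ F
    · rw [link_cons_of_subset he]
      refine ⟨fun hne => ?_, hlink⟩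
      obtain ⟨_, hp⟩ := List.exists_mem_of_ne_nil _ hne
      obtain ⟨G, hG, heG, -⟩ := mem_link.1 hp
      obtain ⟨x, hxF, G', hG', heG', hxG'⟩ := h F l List.suffix_rfl he ⟨G, hG, heG⟩
      exact Finset.not_disjoint_iff.2 ⟨x, hxF, mem_vertices.2 ⟨G' \ e, mem_link.2
        ⟨G', hG', heG', rfl⟩, Finset.mem_sdiff.2 ⟨hxG', (Finset.mem_sdiff.1 hxF).2⟩⟩⟩
    · rwa [link_cons_of_not_subset he]

theorem card_filter_mem_link {l : List (Finset V)} {x : V} (hx : x ∉ e) :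
    {p ∈ (link e l).toFinset | x ∈ p}.card = {F ∈ l.toFinset | insert x e ⊆ F}.card := by
  have himage : {p ∈ (link e l).toFinset | x ∈ p} =
      {F ∈ l.toFinset | insert x e ⊆ F}.image (· \ e) := by
    ext p
    simp only [Finset.mem_filter, List.mem_toFinset, mem_link, Finset.mem_image,
      Finset.insert_subset_iff]
    constructor
    · rintro ⟨⟨F, hF, heF, rfl⟩, hxF⟩
      exact ⟨F, ⟨hF, (Finset.mem_sdiff.1 hxF).1, heF⟩, rfl⟩
    · rintro ⟨F, ⟨hF, hxF, heF⟩, rfl⟩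
      exact ⟨⟨F, hF, heF, rfl⟩, Finset.mem_sdiff.2 ⟨hxF, hx⟩⟩
  rw [himage, Finset.card_image_of_injOn]
  exact (injOn_sdiff_right e).mono fun F hF =>
    (Finset.subset_insert x e).trans (Finset.mem_filter.1 hF).2

theorem filter_mem_link_eq_empty {l : List (Finset V)} {x : V} (hx : x ∈ e) :
    {p ∈ (link e l).toFinset | x ∈ p} = ∅ := by
  refine Finset.filter_eq_empty_iff.2 fun p hp hxp => ?_
  obtain ⟨F, -, -, rfl⟩ := mem_link.1 (List.mem_toFinset.1 hp)
  exact (Finset.mem_sdiff.1 hxp).2 hx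

end Link

section Shelling

variable {K : Set (Finset V)} {d : ℕ} {l : List (Finset V)}

theorem exists_isFacet_of_mem (hK : K.Finite) {σ : Finset V} (hσ : σ ∈ K) :
    ∃ τ, IsFacet K τ ∧ σ ⊆ τ := by
  obtain ⟨τ, hστ, hτ⟩ := hK.exists_le_maximal hσ
  exact ⟨τ, ⟨hτ.prop, fun ρ hρ hle => hle.antisymm (hτ.le_of_ge hρ hle)⟩, hστ⟩

theorem isFacet_of_card (hK : K.Finite) (hpure : PureDim K d) {F : Finset V} (hF : F ∈ K)
    (hcard : F.card = d + 1) : IsFacet K F := by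
  obtain ⟨G, hG, hFG⟩ := exists_isFacet_of_mem hK hF
  rwa [Finset.eq_of_subset_of_card_le hFG (by rw [hpure.2 G hG, hcard])]

theorem pureDim_of_isShellingDown_of_suffix (hl : IsShellingDown K d l (l.length - 1))
    {F : Finset V} {rest : List (Finset V)} (hsuff : F :: rest <:+ l) (hne : rest ≠ []) :
    PureDim (generatedByL K [F] ∩ generatedByL K rest) (d - 1) := by
  obtain ⟨pre, rfl⟩ := hsuff
  have hlen := List.length_pos_iff.2 hne
  have hstep := hl.2.2.2 pre.length (by simp only [List.length_append, List.length_cons]; lia)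
  rwa [List.getD_append_right _ _ _ _ le_rfl, Nat.sub_self, List.getD_cons_zero,
    List.drop_append, List.drop_of_length_le (Nat.le_succ _), Nat.add_sub_cancel_left,
    List.nil_append, List.drop_succ_cons, List.drop_zero] at hstep

theorem exists_mem_of_isShellingDown_of_suffix [DecidableEq V]
    (hl : IsShellingDown K d l (l.length - 1))
    {e : Finset V} (he : e ∈ K) (hd : e.card < d) {F : Finset V} {rest : List (Finset V)}
    (hsuff : F :: rest <:+ l) (heF : e ⊆ F) (hrest : ∃ G ∈ rest, e ⊆ G) :
    ∃ x ∈ F \ e, ∃ G ∈ rest, e ⊆ G ∧ x ∈ G := by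
  obtain ⟨G, hG, heG⟩ := hrest
  have hpure := pureDim_of_isShellingDown_of_suffix hl hsuff (List.ne_nil_of_mem hG)
  set T := generatedByL K [F] ∩ generatedByL K rest
  have hTF : ∀ σ ∈ T, σ ⊆ F := by
    rintro σ ⟨⟨-, θ, hθ, hσθ⟩, -⟩
    rwa [List.mem_singleton.1 hθ] at hσθ
  have hT : T.Finite := F.powerset.finite_toSet.subset fun σ hσ => Finset.mem_powerset.2 (hTF σ hσ)
  obtain ⟨σ, hσ, heσ⟩ := exists_isFacet_of_mem hT
    (show e ∈ T from ⟨⟨he, F, List.mem_singleton_self F, heF⟩, he, G, hG, heG⟩)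
  obtain ⟨x, hxσ, hxe⟩ := Finset.exists_mem_notMem_of_card_lt_card
    (show e.card < σ.card by rw [hpure.2 σ hσ]; lia)
  obtain ⟨-, -, G', hG', hσG'⟩ := hσ.1
  exact ⟨x, Finset.mem_sdiff.2 ⟨hTF σ hσ.1 hxσ, hxe⟩, G', hG', heσ.trans hσG', hσG' hxσ⟩

variable [DecidableEq V]

theorem card_filter_subset_le_two (hpure : PureDim K d) (hK : IsNonbranching K d)
    (hl : ∀ F, F ∈ l ↔ IsFacet K F) {σ : Finset V} (hσ : σ.card = d) :
    {F ∈ l.toFinset | σ ⊆ F}.card ≤ 2 := by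
  refine hK σ hσ _ fun F hF => ?_
  obtain ⟨hFl, hσF⟩ := Finset.mem_filter.1 hF
  have hfacet := (hl F).1 (List.mem_toFinset.1 hFl)
  exact ⟨hfacet.1, hpure.2 F hfacet, hσF⟩

theorem exists_card_filter_insert_subset_eq_one (hfin : K.Finite) (hpure : PureDim K d)
    (hl : ∀ F, F ∈ l ↔ IsFacet K F) {e : Finset V} (hd : e.card + 1 = d) (he : e ∈ bdry K d) :
    ∃ x ∉ e, {F ∈ l.toFinset | insert x e ⊆ F}.card = 1 := by
  obtain ⟨-, θ, ⟨-, hθ, F, ⟨hF, hFcard, hθF⟩, huniq⟩, heθ⟩ := he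
  obtain ⟨x, hx, rfl⟩ := Finset.exists_eq_insert_iff.2 ⟨heθ, hd.trans hθ.symm⟩
  refine ⟨x, hx, Finset.card_eq_one.2 ⟨F, ?_⟩⟩
  ext G
  rw [Finset.mem_filter, Finset.mem_singleton, List.mem_toFinset, hl]
  constructor
  · exact fun ⟨hG, hxG⟩ => huniq G ⟨hG.1, hpure.2 G hG, hxG⟩
  · rintro rfl
    exact ⟨isFacet_of_card hfin hpure hF hFcard, hθF⟩

-- The link of a boundary face has all degrees at most two and a vertex of degree one, hence more
-- vertices than edges. Reading its edges from the end of the list, each one after the first adds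
-- at most one vertex, so none of them can fail to add a vertex.
theorem not_sdiff_subset_vertices_link (hfin : K.Finite) (hpure : PureDim K d)
    (hK : IsNonbranching K d) (hl : IsShellingDown K d l (l.length - 1)) {e : Finset V}
    (hd : e.card + 1 = d) (he : e ∈ bdry K d) {F : Finset V} {rest : List (Finset V)}
    (hsuff : F :: rest <:+ l) (heF : e ⊆ F) : ¬F \ e ⊆ vertices (link e rest) := by
  obtain ⟨x, hx, hdeg_one⟩ := exists_card_filter_insert_subset_eq_one hfin hpure hl.2.1 hd he
  refine not_subset_vertices_of_degree_le_two (nodup_link hl.1) ?card_two ?meets ?degree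
    ((card_filter_mem_link hx).trans hdeg_one) (cons_link_suffix_link hsuff heF)
  case card_two =>
    intro p hp
    obtain ⟨G, hG, heG, rfl⟩ := mem_link.1 hp
    rw [Finset.card_sdiff_of_subset heG, hpure.2 G ((hl.2.1 G).1 hG)]
    lia
  case meets =>
    exact eachMeetsLater_link fun G rest => exists_mem_of_isShellingDown_of_suffix hl he.1 (by lia)
  case degree =>
    intro y
    by_cases hy : y ∈ e
    · rw [filter_mem_link_eq_empty hy, Finset.card_empty]
      exact zero_le_two
    · rw [card_filter_mem_link hy]
      exact card_filter_subset_le_two hpure hK hl.2.1 (by rw [Finset.card_insert_of_notMem hy, hd])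

theorem exists_suffix_of_mem {F : Finset V} (hF : F ∈ l) :
    ∃ rest, F :: rest <:+ l ∧ ∀ G ∈ l, l.idxOf F < l.idxOf G → G ∈ rest := by
  obtain ⟨pre, rest, rfl, hFpre⟩ := List.eq_append_cons_of_mem hF
  refine ⟨rest, List.suffix_append _ _, fun G hG hlt => ?_⟩
  rw [List.idxOf_append_of_notMem hFpre, List.idxOf_cons_self, add_zero] at hlt
  by_contra hGrest
  rcases List.mem_append.1 hG with hGpre | hGF
  · rw [List.idxOf_append_of_mem hGpre] at hlt
    exact hlt.not_gt (List.idxOf_lt_length_of_mem hGpre)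
  · obtain rfl := (List.mem_cons.1 hGF).resolve_right hGrest
    rw [List.idxOf_append_of_notMem hFpre, List.idxOf_cons_self, add_zero] at hlt
    exact lt_irrefl _ hlt

theorem before_of_idxOf_lt {F G : Finset V} (hG : G ∈ l) (h : l.idxOf F < l.idxOf G) :
    Before l F G := by
  have hGl := List.idxOf_lt_length_of_mem hG
  refine ⟨l.idxOf F, l.idxOf G, h, hGl, ?_, ?_⟩
  · rw [List.getD_eq_getElem _ _ (h.trans hGl), List.getElem_idxOf]
  · rw [List.getD_eq_getElem _ _ hGl, List.getElem_idxOf]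

theorem idxOf_lt_of_mem_bdry (hfin : K.Finite) (hpure : PureDim K d) (hK : IsNonbranching K d)
    (hl : IsShellingDown K d l (l.length - 1)) {e : Finset V} (hd : e.card + 1 = d)
    (he : e ∈ bdry K d) {F G H : Finset V} (hF : F ∈ l) (hG : G ∈ l) (hH : H ∈ l) (hHF : H ≠ F)
    {x y : V} (hxy : x ≠ y) (hx : x ∉ e) (hy : y ∉ e) (hxyF : insert x (insert y e) ⊆ F)
    (hxG : insert x e ⊆ G) (hyH : insert y e ⊆ H) (hFG : l.idxOf F < l.idxOf G) :
    l.idxOf H < l.idxOf F := by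
  by_contra! hle
  have hFH : l.idxOf F < l.idxOf H := hle.lt_of_ne fun h => hHF ((List.idxOf_inj hF).1 h).symm
  obtain ⟨rest, hsuff, hrest⟩ := exists_suffix_of_mem hF
  simp only [Finset.insert_subset_iff] at hxyF hxG hyH
  refine not_sdiff_subset_vertices_link hfin hpure hK hl hd he hsuff hxyF.2.2 ?_
  have hlink : F \ e = {x, y} := by
    refine (Finset.eq_of_subset_of_card_le ?_ ?_).symm
    · simp [Finset.insert_subset_iff, hx, hy, hxyF.1, hxyF.2.1]
    · rw [Finset.card_pair hxy, Finset.card_sdiff_of_subset hxyF.2.2,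
        hpure.2 F ((hl.2.1 F).1 hF)]
      lia
  rw [hlink, Finset.insert_subset_iff, Finset.singleton_subset_iff]
  exact ⟨mem_vertices.2 ⟨G \ e, mem_link.2 ⟨G, hrest G hG hFG, hxG.2, rfl⟩,
      Finset.mem_sdiff.2 ⟨hxG.1, hx⟩⟩,
    mem_vertices.2 ⟨H \ e, mem_link.2 ⟨H, hrest H hH hFH, hyH.2, rfl⟩,
      Finset.mem_sdiff.2 ⟨hyH.1, hy⟩⟩⟩

theorem idxOf_succ_lt_of_fan (hfin : K.Finite) (hpure : PureDim K d) (hK : IsNonbranching K d)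
    (hl : IsShellingDown K d l (l.length - 1)) {e : Finset V} (hd : e.card + 1 = d)
    (he : e ∈ bdry K d) {k : ℕ} {P : ℕ → Finset V} {u : ℕ → V} (hP : ∀ i ≤ k, P i ∈ l)
    (heP : ∀ i ≤ k, e ⊆ P i) (hne : ∀ i, 1 ≤ i → i < k → P (i + 1) ≠ P i)
    (hue : ∀ i, 1 ≤ i → i ≤ k → u i ∉ e) (huu : ∀ i, 1 ≤ i → i < k → u i ≠ u (i + 1))
    (hu : ∀ i < k, u (i + 1) ∈ P i ∧ u (i + 1) ∈ P (i + 1))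
    (hstart : l.idxOf (P 1) < l.idxOf (P 0)) {i : ℕ} (hi : i < k) :
    l.idxOf (P (i + 1)) < l.idxOf (P i) := by
  induction i with
  | zero => exact hstart
  | succ i ih =>
    have hik : i < k := (Nat.lt_succ_self i).trans hi
    refine idxOf_lt_of_mem_bdry hfin hpure hK hl hd he (hP _ hi.le) (hP i hik.le) (hP _ hi)
      (hne _ (Nat.succ_pos i) hi) (huu _ (Nat.succ_pos i) hi) (hue _ (Nat.succ_pos i) hi.le)
      (hue _ (Nat.succ_pos _) hi) ?_ ?_ ?_ (ih hik)
    · exact Finset.insert_subset (hu i hik).2 (Finset.insert_subset (hu _ hi).1 (heP _ hi.le))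
    · exact Finset.insert_subset (hu i hik).1 (heP i hik.le)
    · exact Finset.insert_subset (hu _ hi).2 (heP _ hi)

end Shelling

section ConjunctionCone

variable [DecidableEq V]

/-- The combinatorial data of a conjunction cone in `K`: the tetrahedra `{d, w, u i, u (i + 1)}`
for `1 ≤ i < k`, whose edges at `d` are boundary edges, and the tetrahedra `Δ' i` for `i ≤ k` that
lie across the triangles spanned by `d` and the `i`-th edge of the cycle `w, u 1, …, u k`. -/
structure IsConjunctionCone (K : Set (Finset V)) (k : ℕ) (d w : V) (u : ℕ → V)
    (Δ' : ℕ → Finset V) : Prop where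
  two_le : 2 ≤ k
  d_ne_w : d ≠ w
  u_ne_d : ∀ i, 1 ≤ i → i ≤ k → u i ≠ d
  u_ne_w : ∀ i, 1 ≤ i → i ≤ k → u i ≠ w
  injOn_u : Set.InjOn u (Set.Icc 1 k)
  inner_mem : ∀ i, 1 ≤ i → i < k → {d, w, u i, u (i + 1)} ∈ K
  edge_w_mem_bdry : {d, w} ∈ bdry K 3
  edge_u_mem_bdry : ∀ i, 1 ≤ i → i ≤ k → {d, u i} ∈ bdry K 3
  outer_mem : ∀ i ≤ k, Δ' i ∈ K
  card_outer : ∀ i ≤ k, (Δ' i).card = 4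
  outer_ne_inner : ∀ i ≤ k, ∀ j, 1 ≤ j → j < k → Δ' i ≠ {d, w, u j, u (j + 1)}
  subset_outer_zero : {d, w, u 1} ⊆ Δ' 0
  subset_outer : ∀ i, 1 ≤ i → i < k → {d, u i, u (i + 1)} ⊆ Δ' i
  subset_outer_last : {d, u k, w} ⊆ Δ' k

/-- The tetrahedra of a conjunction cone around the edge `{d, w}` in their cyclic order, from
`Δ' 0` through the tetrahedra of the cone to `Δ' k`. -/
def conePage (k : ℕ) (d w : V) (u : ℕ → V) (Δ' : ℕ → Finset V) (i : ℕ) : Finset V :=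
  if 1 ≤ i ∧ i < k then {d, w, u i, u (i + 1)} else Δ' i

theorem conePage_of_lt {k : ℕ} {d w : V} {u : ℕ → V} {Δ' : ℕ → Finset V} {i : ℕ} (hi : 1 ≤ i)
    (hik : i < k) : conePage k d w u Δ' i = {d, w, u i, u (i + 1)} :=
  if_pos ⟨hi, hik⟩

theorem conePage_zero (k : ℕ) (d w : V) (u : ℕ → V) (Δ' : ℕ → Finset V) :
    conePage k d w u Δ' 0 = Δ' 0 :=
  if_neg (by simp)

theorem conePage_last (k : ℕ) (d w : V) (u : ℕ → V) (Δ' : ℕ → Finset V) :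
    conePage k d w u Δ' k = Δ' k :=
  if_neg (by simp)

namespace IsConjunctionCone

variable {K : Set (Finset V)} {k : ℕ} {d w : V} {u : ℕ → V} {Δ' : ℕ → Finset V}

theorem u_ne_u_succ (h : IsConjunctionCone K k d w u Δ') {i : ℕ} (hi : 1 ≤ i) (hik : i < k) :
    u i ≠ u (i + 1) := fun heq =>
  (Nat.lt_succ_self i).ne (h.injOn_u ⟨hi, hik.le⟩ ⟨hi.trans (Nat.le_succ i), hik⟩ heq)

theorem card_inner (h : IsConjunctionCone K k d w u Δ') {i : ℕ} (hi : 1 ≤ i) (hik : i < k) :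
    ({d, w, u i, u (i + 1)} : Finset V).card = 4 := by
  have hd := h.u_ne_d i hi hik.le
  have hw := h.u_ne_w i hi hik.le
  have hd_succ := h.u_ne_d (i + 1) (Nat.succ_pos i) hik
  have hw_succ := h.u_ne_w (i + 1) (Nat.succ_pos i) hik
  simp [Finset.card_insert_of_notMem, h.d_ne_w, hd.symm, hw.symm, hd_succ.symm, hw_succ.symm,
    h.u_ne_u_succ hi hik]

theorem conePage_mem_and_card (h : IsConjunctionCone K k d w u Δ') {i : ℕ} (hi : i ≤ k) :
    conePage k d w u Δ' i ∈ K ∧ (conePage k d w u Δ' i).card = 4 := by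
  rw [conePage]
  split_ifs with hinner
  · exact ⟨h.inner_mem i hinner.1 hinner.2, h.card_inner hinner.1 hinner.2⟩
  · exact ⟨h.outer_mem i hi, h.card_outer i hi⟩

theorem edge_subset_conePage (h : IsConjunctionCone K k d w u Δ') {i : ℕ} (hi : i ≤ k) :
    {d, w} ⊆ conePage k d w u Δ' i := by
  rw [conePage]
  split_ifs with hinner
  · grind
  · rcases (show i = 0 ∨ i = k by lia) with rfl | rfl
    · exact subset_trans (by grind) h.subset_outer_zero
    · exact subset_trans (by grind) h.subset_outer_last

theorem u_succ_mem_conePage (h : IsConjunctionCone K k d w u Δ') {i : ℕ} (hi : i < k) :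
    u (i + 1) ∈ conePage k d w u Δ' i := by
  rw [conePage]
  split_ifs with hinner
  · simp
  · obtain rfl : i = 0 := by lia
    exact h.subset_outer_zero (by simp)

theorem u_mem_conePage (h : IsConjunctionCone K k d w u Δ') {i : ℕ} (hi : 1 ≤ i) (hik : i ≤ k) :
    u i ∈ conePage k d w u Δ' i := by
  rw [conePage]
  split_ifs with hinner
  · simp
  · obtain rfl : i = k := by lia
    exact h.subset_outer_last (by simp)

theorem conePage_succ_ne (h : IsConjunctionCone K k d w u Δ') {i : ℕ} (hi : 1 ≤ i) (hik : i < k) :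
    conePage k d w u Δ' (i + 1) ≠ conePage k d w u Δ' i := by
  rw [conePage_of_lt hi hik]
  rcases (Nat.succ_le_of_lt hik).lt_or_eq with hlt | rfl
  · rw [conePage_of_lt (Nat.succ_pos i) hlt]
    intro heq
    have hmem : u (i + 1 + 1) ∈ ({d, w, u i, u (i + 1)} : Finset V) := by simp [← heq]
    have hne_d := h.u_ne_d _ (Nat.succ_pos (i + 1)) hlt
    have hne_w := h.u_ne_w _ (Nat.succ_pos (i + 1)) hlt
    have hne_succ := (h.u_ne_u_succ (Nat.succ_pos i) hlt).symm
    have hne : u (i + 1 + 1) ≠ u i := fun hu =>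
      absurd (h.injOn_u ⟨Nat.succ_pos (i + 1), hlt⟩ ⟨hi, hik.le⟩ hu) (by lia)
    simp [hne_d, hne_w, hne, hne_succ] at hmem
  · rw [conePage_last]
    exact h.outer_ne_inner _ le_rfl i hi hik

variable {l : List (Finset V)}

theorem conePage_mem_list (h : IsConjunctionCone K k d w u Δ') (hfin : K.Finite)
    (hpure : PureDim K 3) (hl : ∀ F, F ∈ l ↔ IsFacet K F) {i : ℕ} (hi : i ≤ k) :
    conePage k d w u Δ' i ∈ l :=
  (hl _).2 <| isFacet_of_card hfin hpure (h.conePage_mem_and_card hi).1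
    (h.conePage_mem_and_card hi).2

theorem idxOf_conePage_succ_lt (h : IsConjunctionCone K k d w u Δ') (hfin : K.Finite)
    (hpure : PureDim K 3) (hK : IsNonbranching K 3) (hl : IsShellingDown K 3 l (l.length - 1))
    (hstart : l.idxOf (conePage k d w u Δ' 1) < l.idxOf (conePage k d w u Δ' 0)) {i : ℕ}
    (hi : i < k) : l.idxOf (conePage k d w u Δ' (i + 1)) < l.idxOf (conePage k d w u Δ' i) := by
  refine idxOf_succ_lt_of_fan hfin hpure hK hl (by rw [Finset.card_pair h.d_ne_w])
    h.edge_w_mem_bdry (fun i hi => h.conePage_mem_list hfin hpure hl.2.1 hi)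
    (fun i hi => h.edge_subset_conePage hi) (fun i => h.conePage_succ_ne)
    (fun i hi hik => ?_) (fun i => h.u_ne_u_succ)
    (fun i hi => ⟨h.u_succ_mem_conePage hi, h.u_mem_conePage (Nat.succ_pos i) hi⟩) hstart hi
  simp [h.u_ne_d i hi hik, h.u_ne_w i hi hik]

theorem idxOf_outer_lt_idxOf_inner (h : IsConjunctionCone K k d w u Δ') (hfin : K.Finite)
    (hpure : PureDim K 3) (hK : IsNonbranching K 3) (hl : IsShellingDown K 3 l (l.length - 1))
    {i : ℕ} (hik : i + 1 < k)
    (hlt : l.idxOf (conePage k d w u Δ' (i + 1)) < l.idxOf (conePage k d w u Δ' i)) :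
    l.idxOf (Δ' (i + 1)) < l.idxOf (conePage k d w u Δ' (i + 1)) := by
  have hi : 1 ≤ i + 1 := Nat.succ_pos i
  have hpage : ∀ j ≤ k, conePage k d w u Δ' j ∈ l := fun j hj =>
    h.conePage_mem_list hfin hpure hl.2.1 hj
  have houter : Δ' (i + 1) ∈ l := (hl.2.1 _).2 <|
    isFacet_of_card hfin hpure (h.outer_mem _ hik.le) (h.card_outer _ hik.le)
  have hne_d := h.u_ne_d _ hi hik.le
  have hne_w := h.u_ne_w _ hi hik.le
  have hne_d_succ := h.u_ne_d _ (Nat.succ_pos (i + 1)) hik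
  have hne_w_succ := h.u_ne_w _ (Nat.succ_pos (i + 1)) hik
  refine idxOf_lt_of_mem_bdry (e := {d, u (i + 1)}) (x := w) (y := u (i + 1 + 1))
    hfin hpure hK hl (by rw [Finset.card_pair hne_d.symm]) (h.edge_u_mem_bdry _ hi hik.le)
    (hpage _ hik.le) (hpage i (by lia)) houter ?_ hne_w_succ.symm ?_ ?_ ?_ ?_ ?_ hlt
  · rw [conePage_of_lt hi hik]
    exact h.outer_ne_inner _ hik.le _ hi hik
  · simp [h.d_ne_w.symm, hne_w.symm]
  · simp [hne_d_succ, (h.u_ne_u_succ hi hik).symm]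
  · rw [conePage_of_lt hi hik]
    grind
  · have hedge := h.edge_subset_conePage (i := i) (by lia)
    have hu := h.u_succ_mem_conePage (i := i) (by lia)
    grind
  · have := h.subset_outer _ hi hik
    grind

theorem idxOf_outer_lt_idxOf_conePage_one (h : IsConjunctionCone K k d w u Δ') (hfin : K.Finite)
    (hpure : PureDim K 3) (hK : IsNonbranching K 3) (hl : IsShellingDown K 3 l (l.length - 1))
    (hstart : l.idxOf (conePage k d w u Δ' 1) < l.idxOf (conePage k d w u Δ' 0)) {i : ℕ}
    (hi : 1 ≤ i) (hik : i ≤ k) : l.idxOf (Δ' i) < l.idxOf (conePage k d w u Δ' 1) := by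
  have hanti : StrictAntiOn (fun i => l.idxOf (conePage k d w u Δ' i)) (Set.Iic k) :=
    strictAntiOn_Iic_of_succ_lt fun i hi =>
      h.idxOf_conePage_succ_lt hfin hpure hK hl hstart hi
  have h_one_mem : 1 ∈ Set.Iic k := hi.trans hik
  rcases hik.lt_or_eq with hlt | rfl
  · obtain ⟨i, rfl⟩ := Nat.exists_eq_add_of_le' hi
    calc l.idxOf (Δ' (i + 1)) < l.idxOf (conePage k d w u Δ' (i + 1)) :=
          h.idxOf_outer_lt_idxOf_inner hfin hpure hK hl hlt
            (h.idxOf_conePage_succ_lt hfin hpure hK hl hstart ((Nat.lt_succ_self i).trans hlt))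
      _ ≤ l.idxOf (conePage k d w u Δ' 1) := hanti.antitoneOn h_one_mem hik hi
  · rw [← conePage_last i d w u Δ']
    exact hanti h_one_mem hik h.two_le

theorem of_generated {C : Set (Finset V)} {ε : ℕ → Finset V} (hk : 2 ≤ k) (hdw : d ≠ w)
    (hdu : ∀ i, 1 ≤ i → i ≤ k → u i ≠ d ∧ u i ≠ w)
    (huu : ∀ i j, 1 ≤ i → i ≤ k → 1 ≤ j → j ≤ k → i ≠ j → u i ≠ u j)
    (hC : C = {σ | σ ≠ ∅ ∧ ∃ i, 1 ≤ i ∧ i ≤ k - 1 ∧ σ ⊆ {d, w, u i, u (i + 1)}}) (hCK : C ⊆ K)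
    (hε0 : ε 0 = {w, u 1}) (hεk : ε k = {u k, w})
    (hεi : ∀ i, 1 ≤ i → i ≤ k - 1 → ε i = {u i, u (i + 1)})
    (hedges : ∀ e ∈ C, d ∈ e → e.card = 2 → e ∈ bdry K 3)
    (hΔ' : ∀ i ≤ k, Δ' i ∈ K ∧ Δ' i ∉ C ∧ (Δ' i).card = 4 ∧ insert d (ε i) ⊆ Δ' i) :
    IsConjunctionCone K k d w u Δ' := by
  have hmemC : ∀ {σ : Finset V} {i : ℕ}, σ.Nonempty → 1 ≤ i → i < k →
      σ ⊆ {d, w, u i, u (i + 1)} → σ ∈ C := fun hne hi hik hσ =>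
    hC ▸ ⟨hne.ne_empty, _, hi, Nat.le_pred_of_lt hik, hσ⟩
  exact
  { two_le := hk
    d_ne_w := hdw
    u_ne_d := fun i hi hik => (hdu i hi hik).1
    u_ne_w := fun i hi hik => (hdu i hi hik).2
    injOn_u := fun i hi j hj => not_imp_not.1 (huu i j hi.1 hi.2 hj.1 hj.2)
    inner_mem := fun i hi hik => hCK (hmemC (by simp) hi hik subset_rfl)
    edge_w_mem_bdry :=
      hedges _ (hmemC (by simp) le_rfl hk (by grind)) (by simp) (Finset.card_pair hdw)
    edge_u_mem_bdry := fun i hi hik => by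
      refine hedges _ ?_ (by simp) (Finset.card_pair (hdu i hi hik).1.symm)
      rcases hik.lt_or_eq with hlt | rfl
      · exact hmemC (by simp) hi hlt (by grind)
      · exact hmemC (i := i - 1) (by simp) (by lia) (by lia) (by grind)
    outer_mem := fun i hi => (hΔ' i hi).1
    card_outer := fun i hi => (hΔ' i hi).2.2.1
    outer_ne_inner := fun i hi j hj hjk heq =>
      (hΔ' i hi).2.1 (heq ▸ hmemC (by simp) hj hjk subset_rfl)
    subset_outer_zero := hε0 ▸ (hΔ' 0 (Nat.zero_le k)).2.2.2
    subset_outer := fun i hi hik => hεi i hi (Nat.le_pred_of_lt hik) ▸ (hΔ' i hik.le).2.2.2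
    subset_outer_last := hεk ▸ (hΔ' k le_rfl).2.2.2 }

end IsConjunctionCone

theorem conjunction_cone_general {K : Set (Finset V)} (hfin : K.Finite) (hpure : PureDim K 3)
    (hK : IsNonbranching K 3) {k : ℕ} {d w : V} {u : ℕ → V} {Δ' : ℕ → Finset V}
    (h : IsConjunctionCone K k d w u Δ') {l : List (Finset V)}
    (hl : IsShellingDown K 3 l (l.length - 1)) :
    Before l (Δ' 0) {d, w, u 1, u 2} ∨
      ∀ i, 1 ≤ i → i ≤ k → Before l (Δ' i) {d, w, u 1, u 2} := by
  have hpage_one : conePage k d w u Δ' 1 = {d, w, u 1, u 2} := conePage_of_lt le_rfl h.two_le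
  have hmem : ∀ i ≤ k, conePage k d w u Δ' i ∈ l := fun i hi =>
    h.conePage_mem_list hfin hpure hl.2.1 hi
  have h_one_le : 1 ≤ k := one_le_two.trans h.two_le
  rw [← hpage_one, ← conePage_zero k d w u Δ']
  rcases lt_trichotomy (l.idxOf (conePage k d w u Δ' 0)) (l.idxOf (conePage k d w u Δ' 1))
    with hlt | heq | hgt
  · exact .inl (before_of_idxOf_lt (hmem 1 h_one_le) hlt)
  · rw [List.idxOf_inj (hmem 0 (Nat.zero_le k)), conePage_zero, hpage_one] at heq
    exact absurd heq (h.outer_ne_inner 0 (Nat.zero_le k) 1 le_rfl h.two_le)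
  · exact .inr fun i hi hik => before_of_idxOf_lt (hmem 1 h_one_le)
      (h.idxOf_outer_lt_idxOf_conePage_one hfin hpure hK hl hgt hi hik)

end ConjunctionCone

/-- Lemma 9.2 (conjunction cone). -/
theorem conjunction_cone {N : ℕ} (k : ℕ) (hk : 2 ≤ k)
    (B : Geometry.SimplicialComplex ℝ (EuclideanSpace ℝ (Fin N)))
    (hfin : B.faces.Finite)
    (hball : IsBallSet 3 B.space)
    (hpure : PureDim B.faces 3)
    (d w : EuclideanSpace ℝ (Fin N)) (u : ℕ → EuclideanSpace ℝ (Fin N))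
    (hdw : d ≠ w)
    (hdu : ∀ i, 1 ≤ i → i ≤ k → u i ≠ d ∧ u i ≠ w)
    (huu : ∀ i j, 1 ≤ i → i ≤ k → 1 ≤ j → j ≤ k → i ≠ j → u i ≠ u j)
    -- the conjunction cone `C`, generated by the tetrahedra Δ_i = {d,w₋,u_i,u_{i+1}}
    (C : Set (Finset (EuclideanSpace ℝ (Fin N))))
    (hC : C = {σ : Finset (EuclideanSpace ℝ (Fin N)) | σ ≠ ∅ ∧ ∃ i, 1 ≤ i ∧ i ≤ k - 1 ∧
      σ ⊆ ({d, w, u i, u (i + 1)} : Finset (EuclideanSpace ℝ (Fin N)))})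
    (hCB : C ⊆ B.faces)
    -- the edges ε_0,…,ε_k
    (ε : ℕ → Finset (EuclideanSpace ℝ (Fin N)))
    (hε0 : ε 0 = ({w, u 1} : Finset (EuclideanSpace ℝ (Fin N))))
    (hεk : ε k = ({u k, w} : Finset (EuclideanSpace ℝ (Fin N))))
    (hεi : ∀ i, 1 ≤ i → i ≤ k - 1 →
      ε i = ({u i, u (i + 1)} : Finset (EuclideanSpace ℝ (Fin N))))
    -- every edge of C containing d lies in ∂B
    (hedges : ∀ e ∈ C, d ∈ e → e.card = 2 → e ∈ bdry B.faces 3)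
    -- none of the triangles ε_i ∪ {d} lies in ∂B
    (htris : ∀ i ≤ k, insert d (ε i) ∉ bdry B.faces 3)
    -- Δ'_i: the unique 3-face of B outside C containing ε_i ∪ {d}
    (Δ' : ℕ → Finset (EuclideanSpace ℝ (Fin N)))
    (hΔ' : ∀ i ≤ k, Δ' i ∈ B.faces ∧ Δ' i ∉ C ∧ (Δ' i).card = 4 ∧
      insert d (ε i) ⊆ Δ' i ∧
      ∀ F ∈ B.faces, F ∉ C → F.card = 4 → insert d (ε i) ⊆ F → F = Δ' i)
    -- a shelling down of B to a single 3-face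
    (l : List (Finset (EuclideanSpace ℝ (Fin N))))
    (hshell : IsShellingDown B.faces 3 l (l.length - 1)) :
    Before l (Δ' 0) ({d, w, u 1, u 2} : Finset (EuclideanSpace ℝ (Fin N))) ∨
    ∀ i, 1 ≤ i → i ≤ k →
      Before l (Δ' i) ({d, w, u 1, u 2} : Finset (EuclideanSpace ℝ (Fin N))) := by
  refine conjunction_cone_general hfin hpure (isNonbranching_of_isBallSet (by norm_num) hball)
    (.of_generated hk hdw hdu huu hC hCB hε0 hεk hεi hedges fun i hi => ?_) hshell
  exact ⟨(hΔ' i hi).1, (hΔ' i hi).2.1, (hΔ' i hi).2.2.1, (hΔ' i hi).2.2.2.1⟩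

end PaperFormal
end
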